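/- Let f be C²-smooth on an open neighbourhood of S^{n-1} and suppose its restriction to S^{n-1} is orthogonal to all affine functions. If ‖f''_S(θ)‖ ≤ 1 for every θ ∈ S^{n-1} and ∫ ‖f''_S‖²_HS dσ_{n-1} ≤ b² for some b ≥ 0, then ∫ exp{ ((n−1)/(2(1+b²))) · |f| } dσ_{n-1} ≤ 2. -/

import Mathlib

open MeasureTheory Metric Filter
open scoped RealInnerProductSpace ENNReal NNReal

noncomputable section

namespace SecondOrderConc

/-- Euclidean space ℝⁿ. -/
abbrev E (n : ℕ) : Type := EuclideanSpace ℝ (Fin n)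

/-- The uniform (normalized rotation-invariant) probability measure `σ_{n-1}`
on the unit sphere `S^{n-1}`, viewed as a measure on the ambient space ℝⁿ. -/
def sphMeasure (n : ℕ) : Measure (E n) :=
  ((((volume : Measure (E n)).toSphere).map Subtype.val) Set.univ)⁻¹ •
    (((volume : Measure (E n)).toSphere).map Subtype.val)

variable {n : ℕ}

/-- Euclidean Hessian of `f` at `x`, as a continuous linear operator on ℝⁿ. -/
def hess (f : E n → ℝ) (x : E n) : E n →L[ℝ] E n :=
  fderiv ℝ (gradient f) x

/-- Squared Hilbert–Schmidt norm of an operator on ℝⁿ. -/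
def hsNormSq (A : E n →L[ℝ] E n) : ℝ :=
  ∑ i : Fin n, ‖A (EuclideanSpace.single i 1)‖ ^ 2

/-- Orthogonal projection of ℝⁿ onto `θ^⊥` (for a unit vector `θ`). -/
def projPerp (θ : E n) : E n →L[ℝ] E n :=
  ContinuousLinearMap.id ℝ (E n) - (innerSL ℝ θ).smulRight θ

/-- Spherical gradient `∇_S f(θ) = ∇f(θ) − ⟨∇f(θ),θ⟩θ`. -/
def sgrad (f : E n → ℝ) (θ : E n) : E n :=
  gradient f θ - ⟪gradient f θ, θ⟫ • θ

/-- Spherical Hessian `f''_S(θ) = P_{θ^⊥} (f''(θ) − ⟨∇f(θ),θ⟩ I_n) P_{θ^⊥}`. -/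
def sHess (f : E n → ℝ) (θ : E n) : E n →L[ℝ] E n :=
  (projPerp θ).comp
    ((hess f θ - ⟪gradient f θ, θ⟫ • ContinuousLinearMap.id ℝ (E n)).comp (projPerp θ))

/-- Spherical Laplacian `Δ_S f(θ) = Tr f''_S(θ)`. -/
def sLap (f : E n → ℝ) (θ : E n) : ℝ :=
  LinearMap.trace ℝ (E n) (sHess f θ).toLinearMap

/-- Euclidean Laplacian `Δ f = Tr f''`. -/
def eLap (f : E n → ℝ) (x : E n) : ℝ :=
  LinearMap.trace ℝ (E n) (hess f x).toLinearMap

/-- 0-homogeneous extension to `ℝⁿ \ {0}` of (the restriction to the sphere of) `g`. -/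
def ext0 (g : E n → ℝ) : E n → ℝ := fun x => g (‖x‖⁻¹ • x)

/-!
Rotating one of two independent uniformly distributed points of the sphere towards the other, along
the great circle joining them, bounds the covariance of functions on `S^{n-1}` by their spherical
gradients: the variance with constant `1 / (n - 1)`, and `cov(f, h(f))` for increasing `h` with
constant `κ = 1 / √((n - 1) (n - 2))`. For `h = exp`, the Gibbs variational principle turns the
covariance inequality into `∫ exp f ≤ ∫ exp (κ |∇_S f|²)` for centred `f`. Applied to (a smoothing
of) `|∇_S f|`, whose own gradient is at most `‖f''_S‖ ≤ 1`, it bounds `∫ exp (s |∇_S f|²)` in terms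
of `∫ |∇_S f|²`. Since `f` is orthogonal to linear functions, the coordinates of `∇_S f` are
centred, and the Poincaré inequality gives `∫ |∇_S f|² ≤ b² / (n - 2)`. Together with
`exp |x| ≤ exp x + exp (-x) + x² - 3/4`, this settles the case `5 ≤ n`, `b ≤ 1`. For `n ≤ 4`,
`f''_S ≥ -1` along great circles shows that `f` oscillates by at most `π² / 4`. The case `b > 1`
follows by rescaling.
-/

/-! ### Random orthonormal frames -/

section FrameMeasure

/-- The rows of a square matrix, as vectors of Euclidean space. -/
def rows (A : Matrix (Fin n) (Fin n) ℝ) (k : Fin n) : E n := WithLp.toLp 2 (A k)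

/-- An orthonormal family of `n` vectors of `ℝⁿ`, as an orthonormal basis. -/
def frameBasis {v : Fin n → E n} (hv : Orthonormal ℝ v) : OrthonormalBasis (Fin n) ℝ (E n) :=
  .mk hv (hv.linearIndependent.span_eq_top_of_card_eq_finrank' (by simp)).ge

@[simp]
lemma coe_frameBasis {v : Fin n → E n} (hv : Orthonormal ℝ v) : ⇑(frameBasis hv) = v :=
  OrthonormalBasis.coe_mk _ _

/-- The vector whose coordinates in the frame `v` are those of `y`. -/
def frameCombo (v : Fin n → E n) (y : E n) : E n := ∑ l, y l • v l

@[fun_prop]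
lemma continuous_frameCombo : Continuous fun p : (Fin n → E n) × E n => frameCombo p.1 p.2 := by
  unfold frameCombo; fun_prop

lemma continuous_rows : Continuous (rows : Matrix (Fin n) (Fin n) ℝ → Fin n → E n) :=
  continuous_pi fun k => (PiLp.continuous_toLp 2 _).comp (continuous_apply k)

lemma rows_mul (A B : Matrix (Fin n) (Fin n) ℝ) :
    rows (A * B) = fun k => frameCombo (rows B) (rows A k) := by
  funext k; ext j
  simp [rows, frameCombo, Matrix.mul_apply]

lemma orthonormal_rows_iff {A : Matrix (Fin n) (Fin n) ℝ} :
    Orthonormal ℝ (rows A) ↔ A ∈ Matrix.orthogonalGroup (Fin n) ℝ := by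
  rw [orthonormal_iff_ite, Matrix.mem_orthogonalGroup_iff, ← Matrix.ext_iff, forall_comm]
  simp [rows, PiLp.inner_apply, Matrix.mul_apply, Matrix.one_apply, eq_comm]

lemma exists_rows_eq {u : Fin n → E n} (hu : Orthonormal ℝ u) :
    ∃ A : Matrix.orthogonalGroup (Fin n) ℝ, rows A.1 = u :=
  ⟨⟨.of fun k l => u k l, orthonormal_rows_iff.1 hu⟩, rfl⟩

lemma isCompact_setOf_orthonormal : IsCompact {v : Fin n → E n | Orthonormal ℝ v} := by
  refine (isCompact_univ_pi fun _ : Fin n => isCompact_closedBall (0 : E n) 1).of_isClosed_subset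
    ?_ fun v hv i _ => by simpa using (hv.1 i).le
  simp_rw [orthonormal_iff_ite, Set.ofPred_forall]
  exact isClosed_iInter fun i => isClosed_iInter fun j =>
    isClosed_eq (by fun_prop) continuous_const

instance : CompactSpace (Matrix.orthogonalGroup (Fin n) ℝ) := by
  refine isCompact_iff_compactSpace.1 ((isCompact_univ_pi fun _ : Fin n =>
    isCompact_univ_pi fun _ : Fin n => isCompact_closedBall (0 : ℝ) 1).of_isClosed_subset ?_
    fun A hA i _ j _ => by simpa using entry_norm_bound_of_unitary hA i j)
  have h := isCompact_setOf_orthonormal.isClosed.preimage (continuous_rows (n := n))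
  simp only [Set.preimage_ofPred_eq, orthonormal_rows_iff] at h
  exact h

instance : MeasurableSpace (Matrix.orthogonalGroup (Fin n) ℝ) := borel _

instance : BorelSpace (Matrix.orthogonalGroup (Fin n) ℝ) := ⟨rfl⟩

/-- The law of a uniformly random orthonormal frame of `ℝⁿ`: the rows of a Haar distributed
orthogonal matrix. -/
def frameMeasure (n : ℕ) : Measure (Fin n → E n) :=
  (Measure.haarMeasure (⊤ : TopologicalSpace.PositiveCompacts
    (Matrix.orthogonalGroup (Fin n) ℝ))).map fun A => rows A.1

lemma measurable_rows_coe :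
    Measurable fun A : Matrix.orthogonalGroup (Fin n) ℝ => rows A.1 :=
  (continuous_rows.comp continuous_subtype_val).measurable

instance : IsProbabilityMeasure (frameMeasure n) :=
  have : IsProbabilityMeasure (Measure.haarMeasure (⊤ : TopologicalSpace.PositiveCompacts
      (Matrix.orthogonalGroup (Fin n) ℝ))) := ⟨Measure.haarMeasure_self (K₀ := ⊤)⟩
  Measure.isProbabilityMeasure_map measurable_rows_coe.aemeasurable

lemma ae_frameMeasure_orthonormal : ∀ᵐ v ∂frameMeasure n, Orthonormal ℝ v :=
  (ae_map_iff measurable_rows_coe.aemeasurable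
    isCompact_setOf_orthonormal.isClosed.measurableSet).2
    (.of_forall fun A => orthonormal_rows_iff.2 A.2)

lemma integral_comp_frameCombo {Φ : (Fin n → E n) → ℝ} (hΦ : Continuous Φ) {u : Fin n → E n}
    (hu : Orthonormal ℝ u) :
    ∫ v, Φ (fun k => frameCombo v (u k)) ∂frameMeasure n = ∫ v, Φ v ∂frameMeasure n := by
  obtain ⟨W, rfl⟩ := exists_rows_eq hu
  rw [frameMeasure, integral_map measurable_rows_coe.aemeasurable hΦ.aestronglyMeasurable,
    integral_map measurable_rows_coe.aemeasurable
      (Continuous.aestronglyMeasurable (by fun_prop))]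
  simp_rw [← rows_mul]
  exact integral_mul_left_eq_self (fun A : Matrix.orthogonalGroup (Fin n) ℝ => Φ (rows A.1)) W

lemma exists_orthonormal_apply_eq {x : E n} (hx : ‖x‖ = 1) (i : Fin n) :
    ∃ u : Fin n → E n, Orthonormal ℝ u ∧ u i = x := by
  obtain ⟨b, hb⟩ := Orthonormal.exists_orthonormalBasis_extension_of_card_eq (𝕜 := ℝ) (E := E n)
    (by simp) (v := fun _ : Fin n => x) (s := {i}) ⟨fun _ => hx, fun a b hab =>
      (hab (Subsingleton.elim a b)).elim⟩
  exact ⟨b, b.orthonormal, hb i rfl⟩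

lemma exists_orthonormal_apply_eq_apply_eq {x w : E n} (hx : ‖x‖ = 1) (hw : ‖w‖ = 1)
    (hxw : ⟪x, w⟫ = 0) {i j : Fin n} (hij : i ≠ j) :
    ∃ u : Fin n → E n, Orthonormal ℝ u ∧ u i = x ∧ u j = w := by
  have hwx : ⟪w, x⟫ = 0 := by rwa [real_inner_comm]
  obtain ⟨b, hb⟩ := Orthonormal.exists_orthonormalBasis_extension_of_card_eq (𝕜 := ℝ) (E := E n)
    (by simp) (v := fun k : Fin n => if k = i then x else w) (s := {i, j}) (by
      rw [orthonormal_iff_ite]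
      rintro ⟨a, rfl | rfl⟩ ⟨b, rfl | rfl⟩ <;>
        simp [Set.domRestrict, hij, hij.symm, hx, hw, hxw, hwx, Subtype.ext_iff])
  exact ⟨b, b.orthonormal, by simpa using hb i (by simp), by simpa [hij.symm] using hb j (by simp)⟩

end FrameMeasure

section SphereMeasure

instance [NeZero n] : IsProbabilityMeasure (sphMeasure n) := by
  have : Nontrivial (E n) := (WithLp.equiv 2 (Fin n → ℝ)).nontrivial
  refine ⟨ENNReal.inv_mul_cancel ?_ (measure_ne_top _ _)⟩
  rw [Measure.map_apply measurable_subtype_coe .univ, Set.preimage_univ,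
    Measure.toSphere_apply_univ]
  simpa [NeZero.ne n] using (measure_ball_pos _ _ one_pos).ne'

lemma ae_sphMeasure_norm_eq_one (n : ℕ) : ∀ᵐ x ∂sphMeasure n, ‖x‖ = 1 :=
  Measure.ae_smul_measure ((ae_map_iff measurable_subtype_coe.aemeasurable
    (measurableSet_eq_fun measurable_norm measurable_const)).2
    (.of_forall fun x => by simp)) _

lemma map_sphMeasure_linearIsometryEquiv (T : E n ≃ₗᵢ[ℝ] E n) :
    (sphMeasure n).map T = sphMeasure n := by
  unfold sphMeasure
  rw [Measure.map_smul]
  congr 1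
  ext s hs
  have hT : Measurable T := T.continuous.measurable
  rw [Measure.map_apply hT hs, Measure.map_apply measurable_subtype_coe (hT hs),
    Measure.map_apply measurable_subtype_coe hs,
    Measure.toSphere_apply' _ (measurable_subtype_coe (hT hs)),
    Measure.toSphere_apply' _ (measurable_subtype_coe hs)]
  congr 1
  refine Eq.trans (congrArg _ ?_)
    (T.measurePreserving.measure_preimage_emb T.toHomeomorph.measurableEmbedding _)
  ext x
  simp only [Set.mem_preimage, Set.mem_smul, Set.mem_image, Subtype.exists]
  constructor
  · rintro ⟨r, hr, _, ⟨y, hy, hys, rfl⟩, rfl⟩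
    exact ⟨r, hr, T y, ⟨T y, by simpa using hy, hys, rfl⟩, by simp⟩
  · rintro ⟨r, hr, _, ⟨y, hy, hys, rfl⟩, hx⟩
    exact ⟨r, hr, T.symm y, ⟨T.symm y, by simpa using hy, by simpa using hys, rfl⟩,
      by rw [← map_smul, hx]; simp⟩

lemma integral_sphMeasure_comp_frameCombo {φ : E n → ℝ} (hφ : Continuous φ) {v : Fin n → E n}
    (hv : Orthonormal ℝ v) :
    ∫ y, φ (frameCombo v y) ∂sphMeasure n = ∫ x, φ x ∂sphMeasure n := by
  have hb (y : E n) : (frameBasis hv).repr.symm y = frameCombo v y := by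
    simp [frameCombo, ← OrthonormalBasis.sum_repr_symm]
  conv_rhs => rw [← map_sphMeasure_linearIsometryEquiv (frameBasis hv).repr.symm]
  rw [integral_map (frameBasis hv).repr.symm.continuous.aemeasurable hφ.aestronglyMeasurable]
  simp_rw [hb]

end SphereMeasure

section FrameIntegrals

lemma integrable_frameMeasure {Φ : (Fin n → E n) → ℝ} (hΦ : Continuous Φ) :
    Integrable Φ (frameMeasure n) := by
  obtain ⟨C, hC⟩ := isCompact_setOf_orthonormal.exists_bound_of_continuousOn hΦ.continuousOn
  refine .of_bound hΦ.aestronglyMeasurable C ?_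
  filter_upwards [ae_frameMeasure_orthonormal] with v hv using hC v hv

lemma integral_frameMeasure_mono {Φ Ψ : (Fin n → E n) → ℝ} (hΦ : Continuous Φ)
    (hΨ : Continuous Ψ) (h : ∀ v, Orthonormal ℝ v → Φ v ≤ Ψ v) :
    ∫ v, Φ v ∂frameMeasure n ≤ ∫ v, Ψ v ∂frameMeasure n := by
  refine integral_mono_ae (integrable_frameMeasure hΦ) (integrable_frameMeasure hΨ) ?_
  filter_upwards [ae_frameMeasure_orthonormal] with v hv using h v hv

lemma hasDerivAt_integral_frameMeasure {F F' : ℝ → (Fin n → E n) → ℝ}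
    (hF : ∀ s, Continuous (F s)) (hF' : Continuous fun p : ℝ × (Fin n → E n) => F' p.1 p.2)
    (h : ∀ s v, HasDerivAt (fun s => F s v) (F' s v) s) (s : ℝ) :
    HasDerivAt (fun s => ∫ v, F s v ∂frameMeasure n) (∫ v, F' s v ∂frameMeasure n) s := by
  obtain ⟨C, hC⟩ := ((isCompact_closedBall s 1).prod
    (isCompact_setOf_orthonormal (n := n))).exists_bound_of_continuousOn hF'.continuousOn
  refine (hasDerivAt_integral_of_dominated_loc_of_deriv_le (bound := fun _ => C)
    (Metric.closedBall_mem_nhds s one_pos)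
    (.of_forall fun s => (hF s).aestronglyMeasurable) (integrable_frameMeasure (hF s))
    (hF'.comp (Continuous.prodMk_right s)).aestronglyMeasurable ?_ (integrable_const _) ?_).2
  · filter_upwards [ae_frameMeasure_orthonormal] with v hv t ht using hC (t, v) ⟨ht, hv⟩
  · exact .of_forall fun v t _ => h t v

/-- Rotation of the vectors `i` and `j` of a family by the angle `s`. -/
def rotFrame (i j : Fin n) (s : ℝ) (v : Fin n → E n) : Fin n → E n := fun k =>
  if k = i then Real.cos s • v i + Real.sin s • v j
  else if k = j then Real.cos s • v j - Real.sin s • v i else v k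

variable {i j k : Fin n}

lemma rotFrame_left (i j : Fin n) (s : ℝ) (v : Fin n → E n) :
    rotFrame i j s v i = Real.cos s • v i + Real.sin s • v j := if_pos rfl

lemma rotFrame_right (hij : i ≠ j) (s : ℝ) (v : Fin n → E n) :
    rotFrame i j s v j = Real.cos s • v j - Real.sin s • v i := by
  simp [rotFrame, hij.symm]

lemma rotFrame_of_ne_of_ne (hki : k ≠ i) (hkj : k ≠ j) (s : ℝ) (v : Fin n → E n) :
    rotFrame i j s v k = v k := by
  simp [rotFrame, hki, hkj]

@[simp]
lemma rotFrame_zero (i j : Fin n) (v : Fin n → E n) : rotFrame i j 0 v = v := by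
  funext k
  obtain rfl | hki := eq_or_ne k i
  · simp [rotFrame]
  · obtain rfl | hkj := eq_or_ne k j <;> simp [rotFrame, *]

lemma rotFrame_rotFrame (hij : i ≠ j) (s t : ℝ) (v : Fin n → E n) :
    rotFrame i j s (rotFrame i j t v) = rotFrame i j (s + t) v := by
  funext k
  obtain rfl | hki := eq_or_ne k i
  · simp only [rotFrame_left, rotFrame_right hij, Real.cos_add, Real.sin_add]
    module
  · obtain rfl | hkj := eq_or_ne k j
    · simp only [rotFrame_left, rotFrame_right hij, Real.cos_add, Real.sin_add]
      module
    · simp only [rotFrame_of_ne_of_ne hki hkj]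

@[fun_prop]
lemma continuous_rotFrame {X : Type*} [TopologicalSpace X] {a : X → ℝ} {b : X → Fin n → E n}
    (ha : Continuous a) (hb : Continuous b) :
    Continuous fun x => rotFrame i j (a x) (b x) := by
  refine continuous_pi fun k => ?_
  simp only [rotFrame]
  split_ifs <;> fun_prop

lemma frameCombo_rotFrame (hij : i ≠ j) (s : ℝ) (u v : Fin n → E n) (k : Fin n) :
    frameCombo v (rotFrame i j s u k) = rotFrame i j s (fun l => frameCombo v (u l)) k := by
  by_cases hki : k = i <;> by_cases hkj : k = j <;>
    simp [rotFrame, frameCombo, hki, hkj, hij.symm, add_smul, sub_smul, mul_smul,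
      Finset.sum_add_distrib, Finset.sum_sub_distrib, Finset.smul_sum]

lemma orthonormal_rotFrame (hij : i ≠ j) (s : ℝ) {v : Fin n → E n} (hv : Orthonormal ℝ v) :
    Orthonormal ℝ (rotFrame i j s v) := by
  have h := orthonormal_iff_ite.1 hv
  have hs := Real.sin_sq_add_cos_sq s
  rw [orthonormal_iff_ite]
  intro a b
  by_cases hai : a = i <;> by_cases haj : a = j <;> by_cases hbi : b = i <;>
    by_cases hbj : b = j <;>
    simp only [rotFrame, hai, haj, hbi, hbj, hij, hij.symm, if_true, if_false, inner_add_left,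
      inner_add_right, inner_sub_left, inner_sub_right, real_inner_smul_left,
      real_inner_smul_right, h] <;>
    grind

lemma hasDerivAt_rotFrame_left (hij : i ≠ j) (s : ℝ) (v : Fin n → E n) :
    HasDerivAt (fun t => rotFrame i j t v i) (rotFrame i j s v j) s := by
  simp only [rotFrame_left, rotFrame_right hij]
  exact (((Real.hasDerivAt_cos s).smul_const (v i)).add
    ((Real.hasDerivAt_sin s).smul_const (v j))).congr_deriv (by module)

lemma hasDerivAt_rotFrame_right (hij : i ≠ j) (s : ℝ) (v : Fin n → E n) :
    HasDerivAt (fun t => rotFrame i j t v j) (-rotFrame i j s v i) s := by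
  simp only [rotFrame_left, rotFrame_right hij]
  exact (((Real.hasDerivAt_cos s).smul_const (v j)).sub
    ((Real.hasDerivAt_sin s).smul_const (v i))).congr_deriv (by module)

lemma integral_comp_rotFrame {Φ : (Fin n → E n) → ℝ} (hΦ : Continuous Φ) (hij : i ≠ j) (s : ℝ) :
    ∫ v, Φ (rotFrame i j s v) ∂frameMeasure n = ∫ v, Φ v ∂frameMeasure n := by
  rw [← integral_comp_frameCombo hΦ (orthonormal_rotFrame hij s
    (EuclideanSpace.basisFun (Fin n) ℝ).orthonormal)]
  simp_rw [frameCombo_rotFrame hij]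
  simp [frameCombo]

lemma integral_eq_zero_of_hasDerivAt_rotFrame {Φ Φ' : (Fin n → E n) → ℝ} (hΦ : Continuous Φ)
    (hΦ' : Continuous Φ') (hij : i ≠ j)
    (h : ∀ v, HasDerivAt (fun s => Φ (rotFrame i j s v)) (Φ' v) 0) :
    ∫ v, Φ' v ∂frameMeasure n = 0 := by
  have hderiv : ∀ s v, HasDerivAt (fun t => Φ (rotFrame i j t v)) (Φ' (rotFrame i j s v)) s := by
    intro s v
    have hs := h (rotFrame i j s v)
    simp only [rotFrame_rotFrame hij] at hs
    rw [← sub_self s] at hs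
    simpa using hs.comp_sub_const s s
  have hint := hasDerivAt_integral_frameMeasure (fun s => by fun_prop) (by fun_prop) hderiv 0
  simp only [integral_comp_rotFrame hΦ hij, integral_comp_rotFrame hΦ' hij] at hint
  exact hint.unique (hasDerivAt_const _ _)

lemma exists_ae_abs_le_sphMeasure {φ : E n → ℝ} (hφ : Continuous φ) :
    ∃ C, ∀ᵐ x ∂sphMeasure n, |φ x| ≤ C := by
  obtain ⟨C, hC⟩ := (isCompact_sphere (0 : E n) 1).exists_bound_of_continuousOn hφ.continuousOn
  refine ⟨C, ?_⟩
  filter_upwards [ae_sphMeasure_norm_eq_one n] with x hx using hC x (by simpa using hx)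

variable [NeZero n]

lemma memLp_sphMeasure {φ : E n → ℝ} (hφ : Continuous φ) (p : ℝ≥0∞) :
    MemLp φ p (sphMeasure n) :=
  have ⟨C, hC⟩ := exists_ae_abs_le_sphMeasure hφ
  .of_bound hφ.aestronglyMeasurable C hC

lemma integrable_sphMeasure {φ : E n → ℝ} (hφ : Continuous φ) : Integrable φ (sphMeasure n) :=
  memLp_one_iff_integrable.1 (memLp_sphMeasure hφ 1)

lemma integral_sphMeasure_mono {φ ψ : E n → ℝ} (hφ : Continuous φ) (hψ : Continuous ψ)
    (h : ∀ x, ‖x‖ = 1 → φ x ≤ ψ x) : ∫ x, φ x ∂sphMeasure n ≤ ∫ x, ψ x ∂sphMeasure n := by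
  refine integral_mono_ae (integrable_sphMeasure hφ) (integrable_sphMeasure hψ) ?_
  filter_upwards [ae_sphMeasure_norm_eq_one n] with x hx using h x hx

lemma integrable_sphMeasure_prod_frameMeasure {H : E n × (Fin n → E n) → ℝ} (hH : Continuous H) :
    Integrable H ((sphMeasure n).prod (frameMeasure n)) := by
  obtain ⟨C, hC⟩ := ((isCompact_sphere (0 : E n) 1).prod
    (isCompact_setOf_orthonormal (n := n))).exists_bound_of_continuousOn hH.continuousOn
  refine .of_bound hH.aestronglyMeasurable C ?_
  filter_upwards [Measure.quasiMeasurePreserving_fst.ae (ae_sphMeasure_norm_eq_one n),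
    Measure.quasiMeasurePreserving_snd.ae ae_frameMeasure_orthonormal] with p hx hv
    using hC p ⟨by simpa using hx, hv⟩

lemma integral_integral_mul_comp_frameCombo {Φ : (Fin n → E n) → ℝ} {φ : E n → ℝ}
    (hΦ : Continuous Φ) (hφ : Continuous φ) :
    ∫ y, ∫ v, Φ v * φ (frameCombo v y) ∂frameMeasure n ∂sphMeasure n =
      (∫ v, Φ v ∂frameMeasure n) * ∫ x, φ x ∂sphMeasure n := by
  have hint : Integrable (fun p : E n × (Fin n → E n) => Φ p.2 * φ (frameCombo p.2 p.1))
    ((sphMeasure n).prod (frameMeasure n)) :=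
      integrable_sphMeasure_prod_frameMeasure (by fun_prop)
  rw [integral_integral_swap hint, ← integral_mul_const]
  refine integral_congr_ae ?_
  filter_upwards [ae_frameMeasure_orthonormal] with v hv
  rw [integral_const_mul, integral_sphMeasure_comp_frameCombo hφ hv]

lemma integral_sphMeasure_eq_integral_frameMeasure {φ : E n → ℝ} (hφ : Continuous φ) (i : Fin n) :
    ∫ x, φ x ∂sphMeasure n = ∫ v, φ (v i) ∂frameMeasure n := by
  have hy : ∀ᵐ y ∂sphMeasure n, ∫ v, φ (frameCombo v y) ∂frameMeasure n =
      ∫ v, φ (v i) ∂frameMeasure n := by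
    filter_upwards [ae_sphMeasure_norm_eq_one n] with y hy
    obtain ⟨u, hu, rfl⟩ := exists_orthonormal_apply_eq hy i
    exact integral_comp_frameCombo (Φ := fun v => φ (v i)) (by fun_prop) hu
  have hswap := integral_integral_mul_comp_frameCombo (Φ := fun _ => 1) continuous_const hφ
  simp only [one_mul, integral_congr_ae hy, integral_const, probReal_univ, one_smul] at hswap
  exact hswap.symm

lemma integral_comp_rotFrame_left {φ : E n → ℝ} (hφ : Continuous φ) (hij : i ≠ j) (s : ℝ) :
    ∫ v, φ (rotFrame i j s v i) ∂frameMeasure n = ∫ x, φ x ∂sphMeasure n := by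
  rw [integral_sphMeasure_eq_integral_frameMeasure hφ i]
  exact integral_comp_rotFrame (Φ := fun v => φ (v i)) (by fun_prop) hij s

end FrameIntegrals

/-! ### Covariance inequalities on the sphere -/

section Covariance

open InnerProductGeometry ProbabilityTheory

lemma exists_norm_eq_one_inner_eq_zero {V : Type*} [NormedAddCommGroup V] [InnerProductSpace ℝ V]
    (hV : 1 < Module.finrank ℝ V) (x : V) : ∃ w : V, ‖w‖ = 1 ∧ ⟪x, w⟫ = 0 := by
  have hne : (ℝ ∙ x)ᗮ ≠ ⊥ := by
    rw [ne_eq, Submodule.orthogonal_eq_bot_iff]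
    intro htop
    have := finrank_span_le_card (R := ℝ) ({x} : Set V)
    rw [htop, finrank_top] at this
    simp at this
    omega
  obtain ⟨w, hw, hw0⟩ := Submodule.exists_mem_ne_zero_of_ne_bot hne
  refine ⟨‖w‖⁻¹ • w, norm_smul_inv_norm hw0, ?_⟩
  rw [real_inner_smul_right, Submodule.mem_orthogonal_singleton_iff_inner_right.1 hw, mul_zero]

lemma exists_eq_cos_angle_add_sin_angle {V : Type*} [NormedAddCommGroup V]
    [InnerProductSpace ℝ V] (hV : 1 < Module.finrank ℝ V) {x y : V} (hx : ‖x‖ = 1)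
    (hy : ‖y‖ = 1) :
    ∃ w : V, ‖w‖ = 1 ∧ ⟪x, w⟫ = 0 ∧
      y = Real.cos (angle x y) • x + Real.sin (angle x y) • w := by
  set z := y - ⟪x, y⟫ • x with hz
  have hsin : Real.sin (angle x y) = ‖z‖ := by
    rw [← sq_eq_sq₀ (sin_angle_nonneg x y) (norm_nonneg z), Real.sin_sq,
      ← inner_eq_cos_angle_of_norm_eq_one hx hy, hz, norm_sub_sq_real, norm_smul,
      real_inner_smul_right, real_inner_comm, hx, hy, Real.norm_eq_abs, mul_one, sq_abs]
    ring
  rw [hsin, ← inner_eq_cos_angle_of_norm_eq_one hx hy]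
  obtain hz0 | hz0 := eq_or_ne z 0
  · obtain ⟨w, hw, hxw⟩ := exists_norm_eq_one_inner_eq_zero hV x
    exact ⟨w, hw, hxw, by rw [hz0, norm_zero, zero_smul, add_zero, ← sub_eq_zero, ← hz, hz0]⟩
  · refine ⟨‖z‖⁻¹ • z, norm_smul_inv_norm hz0, ?_, ?_⟩
    · simp [hz, real_inner_smul_right, inner_sub_right, hx]
    · rw [smul_inv_smul₀ (norm_ne_zero_iff.2 hz0), hz, add_sub_cancel]

/-- The correlation `𝔼 ∂_{v_k} f(v_i) ∂_{v_k} g(w)` of directional derivatives along the vector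
`v_k` of a random frame `v`, where `w` is at angle `s` from `v_i` towards `v_j`. -/
def derivPairing (f g : E n → ℝ) (i j k : Fin n) (s : ℝ) : ℝ :=
  ∫ v, fderiv ℝ f (v i) (v k) * fderiv ℝ g (rotFrame i j s v i) (v k) ∂frameMeasure n

variable {f g : E n → ℝ} {i j k : Fin n}

lemma integral_comp_rotFrame_mul_fderiv (hf : ContDiff ℝ 1 f) (hg : ContDiff ℝ 1 g)
    (hij : i ≠ j) (hik : i ≠ k) (hjk : j ≠ k) (s : ℝ) :
    ∫ v, f (rotFrame i j s v i) * fderiv ℝ g (v i) (v j) ∂frameMeasure n =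
      Real.sin s * ∫ v, fderiv ℝ f (rotFrame i j s v i) (v k) * fderiv ℝ g (v i) (v k)
        ∂frameMeasure n := by
  have hfc := hf.continuous
  have := hf.continuous_fderiv one_ne_zero
  have := hg.continuous_fderiv one_ne_zero
  have hzero := integral_eq_zero_of_hasDerivAt_rotFrame
    (Φ := fun v => f (rotFrame i j s v i) * fderiv ℝ g (v i) (v k))
    (Φ' := fun v => Real.sin s * (fderiv ℝ f (rotFrame i j s v i) (v k) * fderiv ℝ g (v i) (v k)) -
      f (rotFrame i j s v i) * fderiv ℝ g (v i) (v j)) (by fun_prop) (by fun_prop) hjk fun v => by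
    have hj := (((hasDerivAt_rotFrame_left hjk 0 v).const_smul (Real.sin s)).const_add
      (Real.cos s • v i))
    have hk := hasDerivAt_rotFrame_right hjk 0 v
    simp only [rotFrame_zero] at hj hk
    have hj' := ((hf.differentiable one_ne_zero _).hasFDerivAt).comp_hasDerivAt 0 hj
    have hmul := hj'.mul ((fderiv ℝ g (v i)).hasFDerivAt.comp_hasDerivAt 0 hk)
    refine (hmul.congr_of_eventuallyEq (.of_forall fun t => ?_)).congr_deriv ?_
    · simp [rotFrame_left i j, rotFrame_of_ne_of_ne hij hik]
    · simp [rotFrame_left i j, mul_assoc, sub_eq_add_neg]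
  rw [integral_sub (integrable_frameMeasure (by fun_prop)) (integrable_frameMeasure (by fun_prop)),
    integral_const_mul] at hzero
  linarith

lemma hasDerivAt_integral_mul_comp_rotFrame (hf : ContDiff ℝ 1 f) (hg : ContDiff ℝ 1 g)
    (hij : i ≠ j) (hik : i ≠ k) (hjk : j ≠ k) (s : ℝ) :
    HasDerivAt (fun s => ∫ v, f (v i) * g (rotFrame i j s v i) ∂frameMeasure n)
      (-Real.sin s * derivPairing f g i j k s) s := by
  have hfc := hf.continuous
  have hgc := hg.continuous
  have := hf.continuous_fderiv one_ne_zero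
  have := hg.continuous_fderiv one_ne_zero
  have hderiv := hasDerivAt_integral_frameMeasure
    (F := fun s v => f (v i) * g (rotFrame i j s v i))
    (F' := fun s v => f (v i) * fderiv ℝ g (rotFrame i j s v i) (rotFrame i j s v j))
    (fun s => by fun_prop) (by fun_prop)
    (fun s v => ((hg.differentiable one_ne_zero _).hasFDerivAt.comp_hasDerivAt s
      (hasDerivAt_rotFrame_left hij s v)).const_mul _) s
  refine hderiv.congr_deriv ?_
  -- Rotating the frame back by `s` moves the rotation from `g` to `f`.
  have hback (v : Fin n → E n) : rotFrame i j (-s) (rotFrame i j s v) i = v i := by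
    rw [rotFrame_rotFrame hij, neg_add_cancel, rotFrame_zero]
  have hleft := integral_comp_rotFrame (Φ := fun v =>
    f (rotFrame i j (-s) v i) * fderiv ℝ g (v i) (v j)) (by fun_prop) hij s
  have hright := integral_comp_rotFrame (Φ := fun v =>
    fderiv ℝ f (rotFrame i j (-s) v i) (v k) * fderiv ℝ g (v i) (v k)) (by fun_prop) hij s
  simp only [hback, rotFrame_of_ne_of_ne hik.symm hjk.symm] at hleft hright
  rw [hleft, integral_comp_rotFrame_mul_fderiv hf hg hij hik hjk, ← hright, Real.sin_neg,
    derivPairing]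

variable [NeZero n]

lemma sub_le_integral_mul_comp_rotFrame (hf : ContDiff ℝ 1 f) (hg : ContDiff ℝ 1 g)
    (hij : i ≠ j) (hik : i ≠ k) (hjk : j ≠ k) {K : ℝ} (hK : ∀ s, derivPairing f g i j k s ≤ K)
    {s : ℝ} (hs : s ∈ Set.Icc 0 Real.pi) :
    ∫ x, f x * g x ∂sphMeasure n - K * (1 - Real.cos s) ≤
      ∫ v, f (v i) * g (rotFrame i j s v i) ∂frameMeasure n := by
  have hderiv (t : ℝ) := (hasDerivAt_integral_mul_comp_rotFrame hf hg hij hik hjk t).sub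
    ((Real.hasDerivAt_cos t).const_mul K)
  have hmono := monotoneOn_of_deriv_nonneg (convex_Icc 0 Real.pi)
    (fun t _ => (hderiv t).continuousAt.continuousWithinAt)
    (fun t _ => (hderiv t).differentiableAt.differentiableWithinAt) fun t ht => by
      rw [interior_Icc] at ht
      rw [(hderiv t).deriv]
      nlinarith [hK t, Real.sin_pos_of_mem_Ioo ht]
  have h := hmono (Set.left_mem_Icc.2 Real.pi_pos.le) hs hs.1
  simp only [Pi.sub_apply, rotFrame_zero, Real.cos_zero] at h
  rw [integral_sphMeasure_eq_integral_frameMeasure (φ := fun x => f x * g x)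
    (hf.continuous.mul hg.continuous) i]
  linarith

lemma sub_le_integral_mul_comp_frameCombo (hf : ContDiff ℝ 1 f) (hg : ContDiff ℝ 1 g)
    (hij : i ≠ j) (hik : i ≠ k) (hjk : j ≠ k) {K : ℝ} (hK : ∀ s, derivPairing f g i j k s ≤ K)
    {y : E n} (hy : ‖y‖ = 1) :
    ∫ x, f x * g x ∂sphMeasure n - K * (1 - y i) ≤
      ∫ v, f (v i) * g (frameCombo v y) ∂frameMeasure n := by
  have hfc := hf.continuous
  have hgc := hg.continuous
  have hn : 1 < Module.finrank ℝ (E n) := by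
    have := Fin.nontrivial_iff_two_le.1 ⟨i, j, hij⟩
    rw [finrank_euclideanSpace_fin]
    omega
  let e : E n := EuclideanSpace.single i 1
  have he : ‖e‖ = 1 := by simp [e]
  obtain ⟨w, hw, hew, hyw⟩ := exists_eq_cos_angle_add_sin_angle hn he hy
  set s := angle e y
  obtain ⟨u, hu, hui, huj⟩ := exists_orthonormal_apply_eq_apply_eq he hw hew hij
  have hcos : y i = Real.cos s := by
    rw [← inner_eq_cos_angle_of_norm_eq_one he hy]
    simp [e, EuclideanSpace.inner_single_left]
  have hyu : y = rotFrame i j s u i := by rw [rotFrame_left, hui, huj, ← hyw]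
  have hvi (v : Fin n → E n) : frameCombo v (u i) = v i := by simp [hui, e, frameCombo]
  have h := sub_le_integral_mul_comp_rotFrame hf hg hij hik hjk hK
    (s := s) ⟨angle_nonneg e y, angle_le_pi e y⟩
  rw [← integral_comp_frameCombo (Φ := fun v => f (v i) * g (rotFrame i j s v i))
    (by fun_prop) hu] at h
  simpa only [hvi, ← frameCombo_rotFrame hij, ← hyu, ← hcos] using h

lemma integral_apply_sphMeasure (hij : i ≠ j) : ∫ y : E n, y i ∂sphMeasure n = 0 := by
  have h := integral_comp_rotFrame (Φ := fun v : Fin n → E n => v i i) (by fun_prop) hij Real.pi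
  rw [integral_sphMeasure_eq_integral_frameMeasure (φ := fun y : E n => y i) (by fun_prop) i]
  simp only [rotFrame_left, Real.cos_pi, Real.sin_pi, zero_smul, add_zero, neg_smul, one_smul,
    PiLp.neg_apply, integral_neg] at h
  linarith

/-- Compare `x` with a uniformly random point `y` of the sphere, and move from `x` to `y` along the
great circle. -/
theorem covariance_sphMeasure_le (hf : ContDiff ℝ 1 f) (hg : ContDiff ℝ 1 g)
    (hij : i ≠ j) (hik : i ≠ k) (hjk : j ≠ k) {K : ℝ} (hK : ∀ s, derivPairing f g i j k s ≤ K) :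
    cov[f, g; sphMeasure n] ≤ K := by
  have hfc := hf.continuous
  have hgc := hg.continuous
  have hcorr : ∫ y, (∫ x, f x * g x ∂sphMeasure n - K * (1 - y i)) ∂sphMeasure n ≤
      ∫ y, ∫ v, f (v i) * g (frameCombo v y) ∂frameMeasure n ∂sphMeasure n := by
    refine integral_mono_ae (integrable_sphMeasure (by fun_prop))
      (integrable_sphMeasure_prod_frameMeasure (H := fun p => f (p.2 i) * g (frameCombo p.2 p.1))
        (by fun_prop)).integral_prod_left ?_
    filter_upwards [ae_sphMeasure_norm_eq_one n] with y hy
    exact sub_le_integral_mul_comp_frameCombo hf hg hij hik hjk hK hy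
  rw [integral_integral_mul_comp_frameCombo (Φ := fun v => f (v i)) (by fun_prop) hgc,
    ← integral_sphMeasure_eq_integral_frameMeasure hfc,
    integral_sub (integrable_const _) (integrable_sphMeasure (by fun_prop)), integral_const_mul,
    integral_sub (integrable_const _) (integrable_sphMeasure (by fun_prop)),
    integral_apply_sphMeasure hij] at hcorr
  rw [covariance_eq_sub (memLp_sphMeasure hfc 2) (memLp_sphMeasure hgc 2)]
  simp only [integral_const, probReal_univ, one_smul, sub_zero, mul_one, Pi.mul_apply] at hcorr ⊢
  linarith

end Covariance

section Gradient

lemma inner_gradient_left (f : E n → ℝ) (x y : E n) : ⟪gradient f x, y⟫ = fderiv ℝ f x y := by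
  simp [gradient]

@[fun_prop]
lemma continuous_gradient {f : E n → ℝ} (hf : ContDiff ℝ 1 f) : Continuous (gradient f) := by
  have := hf.continuous_fderiv one_ne_zero
  unfold gradient
  fun_prop

@[fun_prop]
lemma continuous_sgrad {f : E n → ℝ} (hf : ContDiff ℝ 1 f) : Continuous (sgrad f) := by
  have := continuous_gradient hf
  unfold sgrad
  fun_prop

lemma inner_sgrad_left (f : E n → ℝ) {x y : E n} (h : ⟪x, y⟫ = 0) :
    ⟪sgrad f x, y⟫ = fderiv ℝ f x y := by
  simp [sgrad, inner_sub_left, real_inner_smul_left, h]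

lemma inner_sgrad_self (f : E n → ℝ) {x : E n} (h : ‖x‖ = 1) : ⟪sgrad f x, x⟫ = 0 := by
  simp [sgrad, inner_sub_left, real_inner_smul_left, h]

lemma sum_sq_inner_of_orthonormal {v : Fin n → E n} (hv : Orthonormal ℝ v) (x : E n) :
    ∑ k, ⟪x, v k⟫ ^ 2 = ‖x‖ ^ 2 := by
  simpa using (frameBasis hv).sum_sq_norm_inner_left x

lemma sum_sq_fderiv_of_orthonormal {v : Fin n → E n} (hv : Orthonormal ℝ v) (f : E n → ℝ)
    (i : Fin n) :
    ∑ k ∈ Finset.univ.erase i, fderiv ℝ f (v i) (v k) ^ 2 = ‖sgrad f (v i)‖ ^ 2 := by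
  rw [← sum_sq_inner_of_orthonormal hv, ← Finset.add_sum_erase _ _ (Finset.mem_univ i),
    inner_sgrad_self f (hv.1 i), zero_pow two_ne_zero, zero_add]
  exact Finset.sum_congr rfl fun k hk => by
    rw [inner_sgrad_left f (hv.2 (Finset.ne_of_mem_erase hk).symm)]

end Gradient

section PairingBounds

variable {f g u : E n → ℝ} {i j k : Fin n}

lemma integral_sq_fderiv_mul_comp_rotFrame_eq (hf : ContDiff ℝ 1 f) (hu : Continuous u)
    {l : Fin n} (hik : i ≠ k) (hjk : j ≠ k) (hil : i ≠ l) (hjl : j ≠ l) (s : ℝ) :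
    ∫ v, fderiv ℝ f (v i) (v l) ^ 2 * u (rotFrame i j s v i) ∂frameMeasure n =
      ∫ v, fderiv ℝ f (v i) (v k) ^ 2 * u (rotFrame i j s v i) ∂frameMeasure n := by
  have := hf.continuous_fderiv one_ne_zero
  rcases eq_or_ne k l with rfl | hkl
  · rfl
  · rw [← integral_comp_rotFrame (Φ := fun v => fderiv ℝ f (v i) (v k) ^ 2 *
      u (rotFrame i j s v i)) (by fun_prop) hkl (Real.pi / 2)]
    simp [rotFrame_left, rotFrame_of_ne_of_ne hik hil, rotFrame_of_ne_of_ne hjk hjl]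

lemma mul_integral_sq_fderiv_mul_comp_rotFrame_le (hf : ContDiff ℝ 1 f) (hu : Continuous u)
    (hu0 : ∀ x, 0 ≤ u x) (hij : i ≠ j) (hik : i ≠ k) (hjk : j ≠ k) (s : ℝ) :
    ((n : ℝ) - 2) * ∫ v, fderiv ℝ f (v i) (v k) ^ 2 * u (rotFrame i j s v i) ∂frameMeasure n ≤
      ∫ v, ‖sgrad f (v i)‖ ^ 2 * u (rotFrame i j s v i) ∂frameMeasure n := by
  have := hf.continuous_fderiv one_ne_zero
  have hn : 2 ≤ n := Fin.nontrivial_iff_two_le.1 ⟨i, j, hij⟩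
  have hsum : ∫ v, ∑ l ∈ (Finset.univ.erase i).erase j,
      fderiv ℝ f (v i) (v l) ^ 2 * u (rotFrame i j s v i) ∂frameMeasure n ≤
      ∫ v, ‖sgrad f (v i)‖ ^ 2 * u (rotFrame i j s v i) ∂frameMeasure n := by
    refine integral_frameMeasure_mono (by fun_prop) (by fun_prop) fun v hv => ?_
    rw [← sum_sq_fderiv_of_orthonormal hv, Finset.sum_mul]
    exact Finset.sum_le_sum_of_subset_of_nonneg (Finset.erase_subset _ _)
      fun l _ _ => mul_nonneg (sq_nonneg _) (hu0 _)
  rw [integral_finsetSum _ fun l _ => integrable_frameMeasure (by fun_prop),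
    Finset.sum_congr rfl fun l hl => integral_sq_fderiv_mul_comp_rotFrame_eq hf hu hik hjk
      (Finset.ne_of_mem_erase (Finset.mem_of_mem_erase hl)).symm
      (Finset.ne_of_mem_erase hl).symm s] at hsum
  simpa [hij.symm, Nat.sub_sub, Nat.cast_sub hn] using hsum

lemma derivPairing_le (hf : ContDiff ℝ 1 f) (hu : Continuous u) (hu0 : ∀ x, 0 ≤ u x)
    (hgu : ∀ x, fderiv ℝ g x = u x • fderiv ℝ f x) (hij : i ≠ j) (hik : i ≠ k) (hjk : j ≠ k)
    (s : ℝ) {c : ℝ} (hc : 0 < c) :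
    derivPairing f g i j k s ≤
      c / 2 * (∫ v, fderiv ℝ f (v i) (v k) ^ 2 * u (rotFrame i j s v i) ∂frameMeasure n) +
      c⁻¹ / 2 * ∫ v, fderiv ℝ f (v i) (v k) ^ 2 * u (v i) ∂frameMeasure n := by
  have := hf.continuous_fderiv one_ne_zero
  have hrot := integral_comp_rotFrame (Φ := fun v => fderiv ℝ f (v i) (v k) ^ 2 * u (v i))
    (by fun_prop) hij s
  simp only [rotFrame_of_ne_of_ne hik.symm hjk.symm] at hrot
  rw [derivPairing, ← hrot, ← integral_const_mul, ← integral_const_mul,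
    ← integral_add (integrable_frameMeasure (by fun_prop)) (integrable_frameMeasure (by fun_prop))]
  simp only [hgu, smul_apply, smul_eq_mul]
  refine integral_frameMeasure_mono (by fun_prop) (by fun_prop) fun v _ => ?_
  set a := fderiv ℝ f (v i) (v k)
  set b := fderiv ℝ f (rotFrame i j s v i) (v k)
  have hab : a * b ≤ c / 2 * a ^ 2 + c⁻¹ / 2 * b ^ 2 := by
    have := mul_nonneg (inv_nonneg.2 hc.le) (sq_nonneg (c * a - b))
    field_simp at this ⊢
    linarith
  nlinarith [mul_le_mul_of_nonneg_right hab (hu0 (rotFrame i j s v i))]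

variable [NeZero n]

lemma mul_integral_sq_fderiv_mul (hf : ContDiff ℝ 1 f) (hu : Continuous u) (hik : i ≠ k) :
    ((n : ℝ) - 1) * ∫ v, fderiv ℝ f (v i) (v k) ^ 2 * u (v i) ∂frameMeasure n =
      ∫ x, ‖sgrad f x‖ ^ 2 * u x ∂sphMeasure n := by
  have := hf.continuous_fderiv one_ne_zero
  have hsum : ∫ v, ∑ l ∈ Finset.univ.erase i, fderiv ℝ f (v i) (v l) ^ 2 * u (v i)
      ∂frameMeasure n = ∫ v, ‖sgrad f (v i)‖ ^ 2 * u (v i) ∂frameMeasure n := by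
    refine integral_congr_ae ?_
    filter_upwards [ae_frameMeasure_orthonormal] with v hv
    rw [← sum_sq_fderiv_of_orthonormal hv, Finset.sum_mul]
  have hexch (l : Fin n) (hl : i ≠ l) : ∫ v, fderiv ℝ f (v i) (v l) ^ 2 * u (v i)
      ∂frameMeasure n = ∫ v, fderiv ℝ f (v i) (v k) ^ 2 * u (v i) ∂frameMeasure n := by
    simpa using integral_sq_fderiv_mul_comp_rotFrame_eq (j := i) hf hu hik hik hl hl 0
  rw [integral_finsetSum _ fun l _ => integrable_frameMeasure (by fun_prop),
    Finset.sum_congr rfl fun l hl => hexch l (Finset.ne_of_mem_erase hl).symm] at hsum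
  rw [integral_sphMeasure_eq_integral_frameMeasure (φ := fun x => ‖sgrad f x‖ ^ 2 * u x)
    (by fun_prop) i, ← hsum]
  simp [Nat.cast_sub (NeZero.one_le : 1 ≤ n)]

end PairingBounds

section CovarianceInequalities

open ProbabilityTheory

/-- The constant of the covariance inequalities on `S^{n-1}`, `n ≥ 3`: the geometric mean of
`1 / (n - 1)` and `1 / (n - 2)`, the averages over frames of squared directional derivatives along
a vector orthogonal to one, respectively two, given vectors. -/
def covConst (n : ℕ) : ℝ := 1 / √((n - 1) * (n - 2))

lemma covConst_pos (hn : 3 ≤ n) : 0 < covConst n := by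
  have : (3 : ℝ) ≤ n := mod_cast hn
  exact one_div_pos.2 (Real.sqrt_pos.2 (mul_pos (by linarith) (by linarith)))

lemma covConst_sq_mul (hn : 3 ≤ n) : covConst n ^ 2 * ((n - 1) * (n - 2)) = 1 := by
  have : (3 : ℝ) ≤ n := mod_cast hn
  have hpos : 0 < ((n : ℝ) - 1) * (n - 2) := mul_pos (by linarith) (by linarith)
  rw [covConst, div_pow, Real.sq_sqrt hpos.le, one_pow, one_div, inv_mul_cancel₀ hpos.ne']

variable [NeZero n] {f : E n → ℝ}

theorem mul_variance_sphMeasure_le (hn : 3 ≤ n) (hf : ContDiff ℝ 1 f) :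
    ((n : ℝ) - 1) * Var[f; sphMeasure n] ≤ ∫ x, ‖sgrad f x‖ ^ 2 ∂sphMeasure n := by
  obtain ⟨i, j, k, hij, hik, hjk⟩ := Fintype.two_lt_card_iff.1 (by simpa : 2 < Fintype.card (Fin n))
  have hn' : (3 : ℝ) ≤ n := mod_cast hn
  have hgrad := mul_integral_sq_fderiv_mul (u := fun _ => 1) hf continuous_const hik
  have hcov := covariance_sphMeasure_le hf hf hij hik hjk fun s =>
    derivPairing_le hf (u := fun _ => 1) continuous_const (fun _ => zero_le_one)
      (fun x => (one_smul ℝ _).symm) hij hik hjk s one_pos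
  rw [covariance_self hf.continuous.aemeasurable] at hcov
  simp only [mul_one] at hgrad hcov
  rw [← hgrad]
  gcongr
  · linarith
  · linarith

lemma covariance_comp_sphMeasure_le_of_forall (hn : 3 ≤ n) (hf : ContDiff ℝ 1 f) {h : ℝ → ℝ}
    (hh : ContDiff ℝ 1 h) (hmono : Monotone h) {K : ℝ}
    (hK : ∀ (i j : Fin n) (s : ℝ), i ≠ j → covConst n * ∫ v, ‖sgrad f (v i)‖ ^ 2 *
      deriv h (f (rotFrame i j s v i)) ∂frameMeasure n ≤ K) :
    cov[f, h ∘ f; sphMeasure n] ≤ K := by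
  obtain ⟨i, j, k, hij, hik, hjk⟩ := Fintype.two_lt_card_iff.1 (by simpa : 2 < Fintype.card (Fin n))
  have hn' : (3 : ℝ) ≤ n := mod_cast hn
  have hκ := covConst_pos hn
  have hκsq := covConst_sq_mul hn
  set κ := covConst n
  have hu : Continuous fun x => deriv h (f x) := hh.continuous_deriv_one.comp hf.continuous
  have hu0 (x : E n) : 0 ≤ deriv h (f x) := hmono.deriv_nonneg
  have hchain (x : E n) : fderiv ℝ (h ∘ f) x = deriv h (f x) • fderiv ℝ f x :=
    ((hh.differentiable one_ne_zero _).hasDerivAt.comp_hasFDerivAt x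
      (hf.differentiable one_ne_zero x).hasFDerivAt).fderiv
  refine covariance_sphMeasure_le hf (hh.comp hf) hij hik hjk fun s => ?_
  have hc : 0 < κ * (n - 2) := mul_pos hκ (by linarith)
  have hc_inv : (κ * (n - 2))⁻¹ = κ * (n - 1) := inv_eq_of_mul_eq_one_right (by linarith)
  have hpair := derivPairing_le hf hu hu0 hchain hij hik hjk s hc
  have hrot := mul_integral_sq_fderiv_mul_comp_rotFrame_le hf hu hu0 hij hik hjk s
  have hfix := mul_integral_sq_fderiv_mul hf hu hik
  rw [integral_sphMeasure_eq_integral_frameMeasure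
    (φ := fun x => ‖sgrad f x‖ ^ 2 * deriv h (f x)) (by fun_prop) i] at hfix
  have hK0 := hK i j 0 hij
  simp only [rotFrame_zero, ← hfix] at hK0
  rw [hc_inv] at hpair
  linarith [hK i j s hij, mul_le_mul_of_nonneg_left hrot hκ.le]

theorem covariance_comp_sphMeasure_le_of_norm_sgrad_le (hn : 3 ≤ n) (hf : ContDiff ℝ 1 f) {L : ℝ}
    (hL : ∀ x, ‖x‖ = 1 → ‖sgrad f x‖ ≤ L) {h : ℝ → ℝ} (hh : ContDiff ℝ 1 h)
    (hmono : Monotone h) :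
    cov[f, h ∘ f; sphMeasure n] ≤ covConst n * L ^ 2 * ∫ x, deriv h (f x) ∂sphMeasure n := by
  have := hf.continuous
  have := hh.continuous_deriv_one
  refine covariance_comp_sphMeasure_le_of_forall hn hf hh hmono fun i j s hij => ?_
  rw [mul_assoc, ← integral_comp_rotFrame_left (φ := fun x => deriv h (f x)) (by fun_prop) hij s,
    ← integral_const_mul (L ^ 2)]
  refine mul_le_mul_of_nonneg_left (integral_frameMeasure_mono (by fun_prop) (by fun_prop)
    fun v hv => ?_) (covConst_pos hn).le
  have := hL (v i) (hv.1 i)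
  have := hmono.deriv_nonneg (x := f (rotFrame i j s v i))
  gcongr

/-- The Gibbs variational principle: the density `exp ψ / ∫ exp ψ` is tested against `φ`. -/
lemma integral_mul_exp_le {Ω : Type*} [MeasurableSpace Ω] {μ : Measure Ω} [NeZero μ]
    {φ ψ : Ω → ℝ} (hφ : Integrable (fun x => Real.exp (φ x)) μ)
    (hψ : Integrable (fun x => Real.exp (ψ x)) μ)
    (hφψ : Integrable (fun x => φ x * Real.exp (ψ x)) μ)
    (hψψ : Integrable (fun x => ψ x * Real.exp (ψ x)) μ) :
    ∫ x, φ x * Real.exp (ψ x) ∂μ ≤ ∫ x, ψ x * Real.exp (ψ x) ∂μ +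
      (Real.log (∫ x, Real.exp (φ x) ∂μ) - Real.log (∫ x, Real.exp (ψ x) ∂μ)) *
        ∫ x, Real.exp (ψ x) ∂μ := by
  have hM := integral_exp_pos hφ
  have hΛ := integral_exp_pos hψ
  set M := ∫ x, Real.exp (φ x) ∂μ
  set Λ := ∫ x, Real.exp (ψ x) ∂μ
  have hpt (x : Ω) : φ x * Real.exp (ψ x) ≤ ψ x * Real.exp (ψ x) +
      (Real.log M - Real.log Λ - 1) * Real.exp (ψ x) + Λ / M * Real.exp (φ x) := by
    have h := Real.add_one_le_exp (φ x - Real.log M - (ψ x - Real.log Λ))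
    have hexp : Real.exp (φ x - Real.log M - (ψ x - Real.log Λ)) =
        Λ / M * Real.exp (φ x) / Real.exp (ψ x) := by
      rw [Real.exp_sub, Real.exp_sub, Real.exp_sub, Real.exp_log hM, Real.exp_log hΛ]
      field_simp
    rw [hexp, le_div_iff₀ (Real.exp_pos _)] at h
    linarith
  have hsum : Integrable (fun x => ψ x * Real.exp (ψ x) +
      (Real.log M - Real.log Λ - 1) * Real.exp (ψ x)) μ := hψψ.add (hψ.const_mul _)
  refine (integral_mono hφψ (hsum.add (hφ.const_mul _)) hpt).trans_eq ?_
  rw [integral_add' hsum (hφ.const_mul _), integral_add hψψ (hψ.const_mul _),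
    integral_const_mul, integral_const_mul, div_mul_cancel₀ _ hM.ne']
  ring

theorem integral_exp_le_integral_exp_norm_sgrad_sq (hn : 3 ≤ n) (hf : ContDiff ℝ 1 f)
    (hmean : ∫ x, f x ∂sphMeasure n = 0) :
    ∫ x, Real.exp (f x) ∂sphMeasure n ≤
      ∫ x, Real.exp (covConst n * ‖sgrad f x‖ ^ 2) ∂sphMeasure n := by
  have hfc := hf.continuous
  have hM : 0 < ∫ x, Real.exp (covConst n * ‖sgrad f x‖ ^ 2) ∂sphMeasure n :=
    integral_exp_pos (integrable_sphMeasure (by fun_prop))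
  have hΛ : 0 < ∫ x, Real.exp (f x) ∂sphMeasure n :=
    integral_exp_pos (integrable_sphMeasure (by fun_prop))
  have hcov := covariance_comp_sphMeasure_le_of_forall hn hf Real.contDiff_exp Real.exp_monotone
    (K := ∫ x, f x * Real.exp (f x) ∂sphMeasure n +
      (Real.log (∫ x, Real.exp (covConst n * ‖sgrad f x‖ ^ 2) ∂sphMeasure n) -
        Real.log (∫ x, Real.exp (f x) ∂sphMeasure n)) * ∫ x, Real.exp (f x) ∂sphMeasure n)
    fun i j s hij => by
      have hgibbs := integral_mul_exp_le (μ := frameMeasure n)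
        (φ := fun v => covConst n * ‖sgrad f (v i)‖ ^ 2) (ψ := fun v => f (rotFrame i j s v i))
        (integrable_frameMeasure (by fun_prop)) (integrable_frameMeasure (by fun_prop))
        (integrable_frameMeasure (by fun_prop)) (integrable_frameMeasure (by fun_prop))
      rw [integral_comp_rotFrame_left (φ := fun x => Real.exp (f x)) (by fun_prop) hij,
        integral_comp_rotFrame_left (φ := fun x => f x * Real.exp (f x)) (by fun_prop) hij,
        ← integral_sphMeasure_eq_integral_frameMeasure
          (φ := fun x => Real.exp (covConst n * ‖sgrad f x‖ ^ 2)) (by fun_prop)] at hgibbs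
      simpa only [Real.deriv_exp, ← integral_const_mul, mul_assoc] using hgibbs
  rw [covariance_eq_sub (memLp_sphMeasure hfc 2) (memLp_sphMeasure (by fun_prop) 2), hmean,
    zero_mul, sub_zero] at hcov
  simp only [Pi.mul_apply, Function.comp_apply, le_add_iff_nonneg_right,
    mul_nonneg_iff_left_nonneg_of_pos hΛ, sub_nonneg] at hcov
  exact (Real.log_le_log_iff hΛ hM).1 hcov

end CovarianceInequalities

/-! ### Exponential moments of squares -/

section SquareExponential

open ProbabilityTheory

variable {Ω : Type*} {mΩ : MeasurableSpace Ω} {μ : Measure Ω} [IsProbabilityMeasure μ]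
  {X : Ω → ℝ} {C κ ε s : ℝ}

/-- The variable `X` satisfies a covariance inequality with constant `κ`: its covariance with an
increasing function of itself is at most `κ` times the mean of the derivative of that function. -/
def CovarianceInequality (X : Ω → ℝ) (μ : Measure Ω) (κ : ℝ) : Prop :=
  ∀ ⦃h : ℝ → ℝ⦄, ContDiff ℝ 1 h → Monotone h →
    cov[X, h ∘ X; μ] ≤ κ * ∫ ω, deriv h (X ω) ∂μ

lemma memLp_comp_of_bounded (hX : AEMeasurable X μ) (hC : ∀ᵐ ω ∂μ, |X ω| ≤ C) {φ : ℝ → ℝ}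
    (hφ : Continuous φ) (p : ℝ≥0∞) : MemLp (fun ω => φ (X ω)) p μ := by
  obtain ⟨B, hB⟩ := (isCompact_Icc (a := -C) (b := C)).exists_bound_of_continuousOn hφ.continuousOn
  refine .of_bound (hφ.comp_aestronglyMeasurable hX.aestronglyMeasurable) B ?_
  filter_upwards [hC] with ω hω using hB _ (abs_le.1 hω)

lemma integrable_comp_of_bounded (hX : AEMeasurable X μ) (hC : ∀ᵐ ω ∂μ, |X ω| ≤ C) {φ : ℝ → ℝ}
    (hφ : Continuous φ) : Integrable (fun ω => φ (X ω)) μ :=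
  memLp_one_iff_integrable.1 (memLp_comp_of_bounded hX hC hφ 1)

lemma sq_integral_le_integral_sq (hX : MemLp X 2 μ) : (∫ ω, X ω ∂μ) ^ 2 ≤ ∫ ω, X ω ^ 2 ∂μ := by
  simpa [variance_eq_sub hX] using variance_nonneg X μ

lemma hasDerivAt_mul_exp_mul_sq_sub_one (s x : ℝ) :
    HasDerivAt (fun x => x * (Real.exp (s * x ^ 2) - 1))
      (Real.exp (s * x ^ 2) - 1 + 2 * s * (x ^ 2 * Real.exp (s * x ^ 2))) x := by
  refine ((hasDerivAt_id x).mul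
    ((((hasDerivAt_id x).pow 2).const_mul s).exp.sub_const 1)).congr_deriv ?_
  simp only [id, Pi.pow_apply]
  push_cast
  ring

lemma integral_mul_integral_mul_le (hX : AEMeasurable X μ) (hC : ∀ᵐ ω ∂μ, |X ω| ≤ C) (hε : 0 < ε)
    {w : ℝ → ℝ} (hw : Continuous w) (hw0 : ∀ x, 0 ≤ w x) :
    (∫ ω, X ω ∂μ) * ∫ ω, X ω * w (X ω) ∂μ ≤
      ε * ∫ ω, X ω ^ 2 * w (X ω) ∂μ + (∫ ω, X ω ^ 2 ∂μ) / (4 * ε) * ∫ ω, w (X ω) ∂μ := by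
  have hint {φ : ℝ → ℝ} (hφ : Continuous φ) := integrable_comp_of_bounded hX hC hφ
  have hsq : (∫ ω, X ω ∂μ) ^ 2 ≤ ∫ ω, X ω ^ 2 ∂μ :=
    sq_integral_le_integral_sq (memLp_comp_of_bounded hX hC continuous_id 2)
  set m := ∫ ω, X ω ∂μ
  set A := ∫ ω, X ω ^ 2 ∂μ
  have hamgm (x : ℝ) : m * x ≤ ε * x ^ 2 + A / (4 * ε) := by
    have : m * x ≤ ε * x ^ 2 + m ^ 2 / (4 * ε) := by
      field_simp
      nlinarith [sq_nonneg (2 * ε * x - m)]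
    exact this.trans (by gcongr)
  rw [← integral_const_mul, ← integral_const_mul, ← integral_const_mul, ← integral_add
    (hint (φ := fun x => ε * (x ^ 2 * w x)) (by fun_prop))
    (hint (φ := fun x => A / (4 * ε) * w x) (by fun_prop))]
  refine integral_mono (hint (φ := fun x => m * (x * w x)) (by fun_prop))
    (hint (φ := fun x => ε * (x ^ 2 * w x) + A / (4 * ε) * w x) (by fun_prop)) fun ω => ?_
  linarith [mul_le_mul_of_nonneg_right (hamgm (X ω)) (hw0 (X ω))]

lemma integral_sq_mul_exp_sub_one (hX : AEMeasurable X μ) (hC : ∀ᵐ ω ∂μ, |X ω| ≤ C) (s : ℝ) :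
    ∫ ω, X ω ^ 2 * (Real.exp (s * X ω ^ 2) - 1) ∂μ =
      ∫ ω, X ω ^ 2 * Real.exp (s * X ω ^ 2) ∂μ - ∫ ω, X ω ^ 2 ∂μ := by
  have hint {φ : ℝ → ℝ} (hφ : Continuous φ) := integrable_comp_of_bounded hX hC hφ
  rw [← integral_sub (hint (φ := fun x => x ^ 2 * Real.exp (s * x ^ 2)) (by fun_prop))
    (hint (φ := fun x => x ^ 2) (by fun_prop))]
  simp only [mul_sub_one]

lemma CovarianceInequality.mul_integral_sq_mul_exp_le (h : CovarianceInequality X μ κ)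
    (hX : AEMeasurable X μ) (hC : ∀ᵐ ω ∂μ, |X ω| ≤ C) (hε : 0 < ε)
    (hA : ∫ ω, X ω ^ 2 ∂μ ≤ 4 * ε * κ) (hs : 0 ≤ s) :
    (1 - ε - 2 * κ * s) * ∫ ω, X ω ^ 2 * Real.exp (s * X ω ^ 2) ∂μ ≤
      (1 - ε) * ∫ ω, X ω ^ 2 ∂μ + 2 * κ * ∫ ω, (Real.exp (s * X ω ^ 2) - 1) ∂μ := by
  have hint {φ : ℝ → ℝ} (hφ : Continuous φ) := integrable_comp_of_bounded hX hC hφ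
  have hw0 (x : ℝ) : 0 ≤ Real.exp (s * x ^ 2) - 1 := by
    rw [sub_nonneg]
    exact Real.one_le_exp (by positivity)
  have hX2 : MemLp X 2 μ := memLp_comp_of_bounded hX hC continuous_id 2
  have hderiv (x : ℝ) := (hasDerivAt_mul_exp_mul_sq_sub_one s x).deriv
  have hcov := h (h := fun x => x * (Real.exp (s * x ^ 2) - 1)) (by fun_prop)
    (monotone_of_deriv_nonneg (by fun_prop) fun x => by
      rw [hderiv]
      exact add_nonneg (hw0 x) (by positivity))
  have hXw2 : MemLp ((fun x => x * (Real.exp (s * x ^ 2) - 1)) ∘ X) 2 μ :=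
    memLp_comp_of_bounded hX hC (φ := fun x => x * (Real.exp (s * x ^ 2) - 1)) (by fun_prop) 2
  rw [covariance_eq_sub hX2 hXw2] at hcov
  simp only [hderiv, Function.comp_apply, Pi.mul_apply, ← mul_assoc (X _) (X _), ← pow_two]
    at hcov
  have hmean := integral_mul_integral_mul_le hX hC hε
    (w := fun x => Real.exp (s * x ^ 2) - 1) (by fun_prop) hw0
  rw [integral_add (hint (φ := fun x => Real.exp (s * x ^ 2) - 1) (by fun_prop))
    (hint (φ := fun x => 2 * s * (x ^ 2 * Real.exp (s * x ^ 2))) (by fun_prop)),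
    integral_const_mul, integral_sq_mul_exp_sub_one hX hC] at hcov
  rw [integral_sq_mul_exp_sub_one hX hC] at hmean
  have hA' : (∫ ω, X ω ^ 2 ∂μ) / (4 * ε) ≤ κ := by
    rwa [div_le_iff₀ (by positivity), mul_comm]
  have hY := mul_le_mul_of_nonneg_right hA'
    (integral_nonneg fun ω => hw0 (X ω) : 0 ≤ ∫ ω, (Real.exp (s * X ω ^ 2) - 1) ∂μ)
  linarith

lemma hasDerivAt_integral_exp_mul_sq (hX : AEMeasurable X μ) (hC : ∀ᵐ ω ∂μ, |X ω| ≤ C) (s : ℝ) :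
    HasDerivAt (fun s => ∫ ω, (Real.exp (s * X ω ^ 2) - 1) ∂μ)
      (∫ ω, X ω ^ 2 * Real.exp (s * X ω ^ 2) ∂μ) s := by
  have hexp (s : ℝ) : Integrable (fun ω => Real.exp (s * X ω ^ 2)) μ :=
    integrable_comp_of_bounded hX hC (φ := fun x => Real.exp (s * x ^ 2)) (by fun_prop)
  have hmgf := hasDerivAt_mgf (X := fun ω => X ω ^ 2) (μ := μ) (t := s)
    (by simp [integrableExpSet, hexp])
  refine (hmgf.sub_const 1).congr_of_eventuallyEq (.of_forall fun s => ?_)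
  simp [mgf, integral_sub (hexp s) (integrable_const 1)]

/-- The differential inequality satisfied by `s ↦ E exp (s X²) - 1` is integrated from `0`. -/
theorem CovarianceInequality.mul_integral_exp_mul_sq_sub_one_le
    (h : CovarianceInequality X μ κ) (hX : AEMeasurable X μ) (hC : ∀ᵐ ω ∂μ, |X ω| ≤ C)
    (hε : 0 < ε) (hA : ∫ ω, X ω ^ 2 ∂μ ≤ 4 * ε * κ) (hs : 0 ≤ s) :
    (1 - ε - 2 * κ * s) * ∫ ω, (Real.exp (s * X ω ^ 2) - 1) ∂μ ≤
      (1 - ε) * s * ∫ ω, X ω ^ 2 ∂μ := by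
  set A := ∫ ω, X ω ^ 2 ∂μ
  set Y : ℝ → ℝ := fun s => ∫ ω, (Real.exp (s * X ω ^ 2) - 1) ∂μ
  have hderiv (s : ℝ) : HasDerivAt (fun s => (1 - ε) * s * A - (1 - ε - 2 * κ * s) * Y s)
      ((1 - ε) * A - (-(2 * κ) * Y s +
        (1 - ε - 2 * κ * s) * ∫ ω, X ω ^ 2 * Real.exp (s * X ω ^ 2) ∂μ)) s := by
    have hlin : HasDerivAt (fun s => (1 - ε) * s * A) ((1 - ε) * A) s := by
      simpa using ((hasDerivAt_id s).const_mul (1 - ε)).mul_const A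
    have hcoef : HasDerivAt (fun s => 1 - ε - 2 * κ * s) (-(2 * κ)) s := by
      simpa using ((hasDerivAt_id s).const_mul (2 * κ)).const_sub (1 - ε)
    exact hlin.sub (hcoef.mul (hasDerivAt_integral_exp_mul_sq hX hC s))
  have hmono := monotoneOn_of_deriv_nonneg (convex_Ici (0 : ℝ))
    (fun t _ => (hderiv t).continuousAt.continuousWithinAt)
    (fun t _ => (hderiv t).differentiableAt.differentiableWithinAt) fun t ht => by
      rw [interior_Ici] at ht
      rw [(hderiv t).deriv]
      linarith [h.mul_integral_sq_mul_exp_le hX hC hε hA ht.le]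
  simpa [Y] using hmono Set.self_mem_Ici hs hs

end SquareExponential

/-! ### Second order Poincaré inequality and exponential moments -/

section SecondOrder

open ProbabilityTheory

lemma sum_norm_sq_of_orthonormal (A : E n →L[ℝ] E n) {v : Fin n → E n} (hv : Orthonormal ℝ v) :
    ∑ k, ‖A (v k)‖ ^ 2 = hsNormSq A := by
  have htrace (b : OrthonormalBasis (Fin n) ℝ (E n)) :
      ∑ k, ‖A (b k)‖ ^ 2 = LinearMap.trace ℝ (E n) (A.adjoint ∘L A).toLinearMap := by
    rw [LinearMap.trace_eq_sum_inner _ b]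
    simp [ContinuousLinearMap.adjoint_inner_right]
  simpa [hsNormSq] using (htrace (frameBasis hv)).trans (htrace (EuclideanSpace.basisFun _ ℝ)).symm

variable {f : E n → ℝ} {x w : E n}

lemma contDiff_gradient (hf : ContDiff ℝ 2 f) : ContDiff ℝ 1 (gradient f) :=
  (InnerProductSpace.toDual ℝ (E n)).symm.contDiff.comp (hf.fderiv_right (by norm_num))

lemma hasFDerivAt_gradient (hf : ContDiff ℝ 2 f) (x : E n) :
    HasFDerivAt (gradient f) (hess f x) x :=
  ((contDiff_gradient hf).differentiable one_ne_zero x).hasFDerivAt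

lemma contDiff_sgrad (hf : ContDiff ℝ 2 f) : ContDiff ℝ 1 (sgrad f) := by
  have := contDiff_gradient hf
  exact this.sub ((this.inner ℝ contDiff_id).smul contDiff_id)

lemma projPerp_self (h : ‖x‖ = 1) : projPerp x x = 0 := by
  simp [projPerp, h]

lemma inner_projPerp (h : ‖x‖ = 1) (w : E n) : ⟪x, projPerp x w⟫ = 0 := by
  simp [projPerp, h, inner_sub_right, real_inner_smul_right]

lemma sHess_apply (f : E n → ℝ) (h : ⟪x, w⟫ = 0) :
    sHess f x w = hess f x w - ⟪gradient f x, x⟫ • w - ⟪x, hess f x w⟫ • x := by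
  simpa [sHess, projPerp, h] using sub_right_comm _ _ _

lemma sHess_self (f : E n → ℝ) (h : ‖x‖ = 1) : sHess f x x = 0 := by
  simp [sHess, projPerp_self h]

lemma inner_sHess (f : E n → ℝ) (h : ‖x‖ = 1) (w : E n) : ⟪x, sHess f x w⟫ = 0 :=
  inner_projPerp h _

lemma continuous_sHess (hf : ContDiff ℝ 2 f) : Continuous (sHess f) := by
  have := (contDiff_gradient hf).continuous
  have : Continuous (hess f) := (contDiff_gradient hf).continuous_fderiv one_ne_zero
  unfold sHess projPerp
  fun_prop

@[fun_prop]
lemma continuous_hsNormSq_sHess (hf : ContDiff ℝ 2 f) :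
    Continuous fun x => hsNormSq (sHess f x) := by
  have := continuous_sHess hf
  unfold hsNormSq
  fun_prop

lemma fderiv_sgrad_apply (hf : ContDiff ℝ 2 f) (h : ⟪x, w⟫ = 0) :
    fderiv ℝ (sgrad f) x w = sHess f x w - ⟪sgrad f x, w⟫ • x := by
  have hg := hasFDerivAt_gradient hf x
  have hderiv := (hg.sub ((hg.inner ℝ (hasFDerivAt_id x)).smul (hasFDerivAt_id x))).fderiv
  rw [show fderiv ℝ (sgrad f) x = _ from hderiv, sHess_apply f h, inner_sgrad_left f h,
    ← inner_gradient_left, real_inner_comm (hess f x w)]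
  simp only [id, sub_apply, add_apply, smul_apply, ContinuousLinearMap.smulRight_apply,
    ContinuousLinearMap.comp_apply, ContinuousLinearMap.prod_apply, fderivInnerCLM_apply,
    ContinuousLinearMap.id_apply]
  module

lemma norm_sq_fderiv_sgrad (hf : ContDiff ℝ 2 f) (hx : ‖x‖ = 1) (h : ⟪x, w⟫ = 0) :
    ‖fderiv ℝ (sgrad f) x w‖ ^ 2 = ‖sHess f x w‖ ^ 2 + ⟪sgrad f x, w⟫ ^ 2 := by
  rw [fderiv_sgrad_apply hf h, norm_sub_sq_real, real_inner_smul_right,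
    real_inner_comm x (sHess f x w), inner_sHess f hx, norm_smul, hx]
  simp

lemma sum_norm_sq_sgrad_sgrad (hf : ContDiff ℝ 2 f) (i : Fin n) (hx : ‖x‖ = 1) :
    ∑ a, ‖sgrad (fun x => sgrad f x a) x‖ ^ 2 = hsNormSq (sHess f x) + ‖sgrad f x‖ ^ 2 := by
  obtain ⟨v, hv, rfl⟩ := exists_orthonormal_apply_eq hx i
  have hd : DifferentiableAt ℝ (sgrad f) (v i) := (contDiff_sgrad hf).differentiable one_ne_zero _
  have hcoord (a : Fin n) (w : E n) :
      fderiv ℝ (fun x => sgrad f x a) (v i) w = fderiv ℝ (sgrad f) (v i) w a :=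
    DFunLike.congr_fun ((EuclideanSpace.proj (𝕜 := ℝ) a).hasFDerivAt.comp (v i)
      hd.hasFDerivAt).fderiv w
  calc ∑ a, ‖sgrad (fun x => sgrad f x a) (v i)‖ ^ 2
      = ∑ k ∈ Finset.univ.erase i, ∑ a, fderiv ℝ (sgrad f) (v i) (v k) a ^ 2 := by
        rw [Finset.sum_comm]
        simp_rw [← sum_sq_fderiv_of_orthonormal hv, hcoord]
    _ = ∑ k ∈ Finset.univ.erase i,
          (‖sHess f (v i) (v k)‖ ^ 2 + ⟪sgrad f (v i), v k⟫ ^ 2) := by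
        refine Finset.sum_congr rfl fun k hk => ?_
        rw [← norm_sq_fderiv_sgrad hf hx (hv.2 (Finset.ne_of_mem_erase hk).symm),
          EuclideanSpace.real_norm_sq_eq]
    _ = ∑ k, (‖sHess f (v i) (v k)‖ ^ 2 + ⟪sgrad f (v i), v k⟫ ^ 2) :=
        Finset.sum_erase _ (by simp [sHess_self f hx, inner_sgrad_self f hx])
    _ = hsNormSq (sHess f (v i)) + ‖sgrad f (v i)‖ ^ 2 := by
        rw [Finset.sum_add_distrib, sum_norm_sq_of_orthonormal _ hv, sum_sq_inner_of_orthonormal hv]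

lemma integral_fderiv_mul_inner (hf : ContDiff ℝ 1 f) {i j : Fin n} (hij : i ≠ j) (e : E n) :
    ∫ v, fderiv ℝ f (v i) (v j) * ⟪v j, e⟫ ∂frameMeasure n =
      ∫ v, f (v i) * ⟪v i, e⟫ ∂frameMeasure n := by
  have := hf.continuous
  have := hf.continuous_fderiv one_ne_zero
  rw [← sub_eq_zero, ← integral_sub (integrable_frameMeasure (by fun_prop))
    (integrable_frameMeasure (by fun_prop))]
  refine integral_eq_zero_of_hasDerivAt_rotFrame (Φ := fun v => f (v i) * ⟪v j, e⟫)
    (by fun_prop) (by fun_prop) hij fun v => ?_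
  have hi := hasDerivAt_rotFrame_left hij 0 v
  have hj := (hasDerivAt_rotFrame_right hij 0 v).inner ℝ (hasDerivAt_const 0 e)
  have hfi := (hf.differentiable one_ne_zero _).hasFDerivAt.comp_hasDerivAt 0 hi
  exact (hfi.mul hj).congr_deriv (by simp [sub_eq_add_neg])

variable [NeZero n]

lemma integral_inner_sgrad (hf : ContDiff ℝ 1 f) (e : E n) :
    ∫ x, ⟪sgrad f x, e⟫ ∂sphMeasure n = ((n : ℝ) - 1) * ∫ x, ⟪e, x⟫ * f x ∂sphMeasure n := by
  have := hf.continuous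
  have := hf.continuous_fderiv one_ne_zero
  let i : Fin n := 0
  calc ∫ x, ⟪sgrad f x, e⟫ ∂sphMeasure n
      = ∫ v, ∑ j ∈ Finset.univ.erase i, fderiv ℝ f (v i) (v j) * ⟪v j, e⟫ ∂frameMeasure n := by
        rw [integral_sphMeasure_eq_integral_frameMeasure (φ := fun x => ⟪sgrad f x, e⟫)
          (by fun_prop) i]
        refine integral_congr_ae ?_
        filter_upwards [ae_frameMeasure_orthonormal] with v hv
        have hsum := (frameBasis hv).sum_inner_mul_inner (sgrad f (v i)) e
        rw [coe_frameBasis, ← Finset.add_sum_erase _ _ (Finset.mem_univ i),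
          inner_sgrad_self f (hv.1 i), zero_mul, zero_add] at hsum
        rw [← hsum]
        exact Finset.sum_congr rfl fun j hj => by
          rw [inner_sgrad_left f (hv.2 (Finset.ne_of_mem_erase hj).symm)]
    _ = ∑ _j ∈ Finset.univ.erase i, ∫ v, f (v i) * ⟪v i, e⟫ ∂frameMeasure n := by
        rw [integral_finsetSum _ fun _ _ => integrable_frameMeasure (by fun_prop)]
        exact Finset.sum_congr rfl fun j hj =>
          integral_fderiv_mul_inner hf (Finset.ne_of_mem_erase hj).symm e
    _ = ((n : ℝ) - 1) * ∫ x, ⟪e, x⟫ * f x ∂sphMeasure n := by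
        rw [integral_sphMeasure_eq_integral_frameMeasure (φ := fun x => ⟪e, x⟫ * f x)
          (by fun_prop) i]
        simp [Nat.cast_sub (NeZero.one_le : 1 ≤ n), mul_comm, real_inner_comm]

/-- The Poincaré inequality applied to the coordinates of the spherical gradient. -/
theorem mul_integral_norm_sgrad_sq_le (hn : 3 ≤ n) (hf : ContDiff ℝ 2 f)
    (hlin : ∀ e : E n, ∫ x, ⟪e, x⟫ * f x ∂sphMeasure n = 0) :
    ((n : ℝ) - 2) * ∫ x, ‖sgrad f x‖ ^ 2 ∂sphMeasure n ≤
      ∫ x, hsNormSq (sHess f x) ∂sphMeasure n := by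
  have hs := contDiff_sgrad hf
  have := hs.continuous
  have hc (a : Fin n) : ContDiff ℝ 1 fun x => sgrad f x a := by fun_prop
  have hcoord (a : Fin n) : ((n : ℝ) - 1) * ∫ x, sgrad f x a ^ 2 ∂sphMeasure n ≤
      ∫ x, ‖sgrad (fun x => sgrad f x a) x‖ ^ 2 ∂sphMeasure n := by
    have hmean := integral_inner_sgrad (hf.of_le one_le_two) (EuclideanSpace.single a (1 : ℝ))
    simp only [hlin, mul_zero, EuclideanSpace.inner_single_right, one_mul, conj_trivial] at hmean
    have hvar := mul_variance_sphMeasure_le hn (hc a)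
    rwa [variance_of_integral_eq_zero (hc a).continuous.aemeasurable hmean] at hvar
  have hsum := Finset.sum_le_sum fun a (_ : a ∈ Finset.univ) => hcoord a
  have hcont (a : Fin n) : Continuous (sgrad fun x => sgrad f x a) := continuous_sgrad (hc a)
  rw [← Finset.mul_sum, ← integral_finsetSum _ fun a _ => integrable_sphMeasure (by fun_prop),
    ← integral_finsetSum _ fun a _ => integrable_sphMeasure (by fun_prop)] at hsum
  simp_rw [← EuclideanSpace.real_norm_sq_eq] at hsum
  have hHess : ∫ x, ∑ a, ‖sgrad (fun x => sgrad f x a) x‖ ^ 2 ∂sphMeasure n =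
      ∫ x, (hsNormSq (sHess f x) + ‖sgrad f x‖ ^ 2) ∂sphMeasure n := by
    refine integral_congr_ae ?_
    filter_upwards [ae_sphMeasure_norm_eq_one n] with x hx
    exact sum_norm_sq_sgrad_sgrad hf 0 hx
  rw [hHess, integral_add (integrable_sphMeasure (by fun_prop))
    (integrable_sphMeasure (by fun_prop))] at hsum
  linarith

lemma mul_mul_integral_sq_le (hn : 3 ≤ n) (hf : ContDiff ℝ 2 f)
    (hmean : ∫ x, f x ∂sphMeasure n = 0)
    (hlin : ∀ e : E n, ∫ x, ⟪e, x⟫ * f x ∂sphMeasure n = 0) :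
    ((n : ℝ) - 2) * (((n : ℝ) - 1) * ∫ x, f x ^ 2 ∂sphMeasure n) ≤
      ∫ x, hsNormSq (sHess f x) ∂sphMeasure n := by
  have hn' : (3 : ℝ) ≤ n := mod_cast hn
  have hvar := mul_variance_sphMeasure_le hn (hf.of_le one_le_two)
  rw [variance_of_integral_eq_zero hf.continuous.aemeasurable hmean] at hvar
  exact (mul_le_mul_of_nonneg_left hvar (by linarith)).trans
    (mul_integral_norm_sgrad_sq_le hn hf hlin)

end SecondOrder

section GradientNorm

open ProbabilityTheory

variable {f : E n → ℝ} {x : E n} {η : ℝ}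

lemma contDiff_sqrt_norm_sgrad_sq_add (hf : ContDiff ℝ 2 f) (hη : 0 < η) :
    ContDiff ℝ 1 fun x => √(‖sgrad f x‖ ^ 2 + η) :=
  (((contDiff_sgrad hf).norm_sq ℝ).add contDiff_const).sqrt fun x => by positivity

lemma fderiv_sqrt_norm_sgrad_sq_add (hf : ContDiff ℝ 2 f) (hη : 0 < η) (hx : ‖x‖ = 1) {w : E n}
    (hxw : ⟪x, w⟫ = 0) :
    fderiv ℝ (fun x => √(‖sgrad f x‖ ^ 2 + η)) x w =
      ⟪sgrad f x, sHess f x w⟫ / √(‖sgrad f x‖ ^ 2 + η) := by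
  have hs : HasFDerivAt (sgrad f) (fderiv ℝ (sgrad f) x) x :=
    ((contDiff_sgrad hf).differentiable one_ne_zero x).hasFDerivAt
  have : 0 < √(‖sgrad f x‖ ^ 2 + η) := Real.sqrt_pos.2 (by positivity)
  rw [((hs.norm_sq.add_const η).sqrt (by positivity)).fderiv]
  simp only [smul_apply, ContinuousLinearMap.comp_apply, innerSL_apply_apply,
    fderiv_sgrad_apply hf hxw, inner_sub_right, real_inner_smul_right, inner_sgrad_self f hx,
    smul_eq_mul, nsmul_eq_mul]
  field_simp
  ring

lemma norm_sgrad_sqrt_norm_sgrad_sq_add_le (hf : ContDiff ℝ 2 f) (hη : 0 < η) (hx : ‖x‖ = 1) :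
    ‖sgrad (fun x => √(‖sgrad f x‖ ^ 2 + η)) x‖ ≤ ‖sHess f x‖ := by
  set w := sgrad (fun x => √(‖sgrad f x‖ ^ 2 + η)) x
  have hxw : ⟪x, w⟫ = 0 := by rw [real_inner_comm, inner_sgrad_self _ hx]
  have hpos : 0 < √(‖sgrad f x‖ ^ 2 + η) := Real.sqrt_pos.2 (by positivity)
  have hle : ‖sgrad f x‖ ≤ √(‖sgrad f x‖ ^ 2 + η) := Real.le_sqrt_of_sq_le (by linarith)
  have hsq : ‖w‖ * ‖w‖ ≤ ‖sHess f x‖ * ‖w‖ := calc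
    ‖w‖ * ‖w‖ = ⟪sgrad f x, sHess f x w⟫ / √(‖sgrad f x‖ ^ 2 + η) := by
      rw [← real_inner_self_eq_norm_mul_norm, inner_sgrad_left _ hxw,
        fderiv_sqrt_norm_sgrad_sq_add hf hη hx hxw]
    _ ≤ ‖sHess f x‖ * ‖w‖ := by
      rw [div_le_iff₀' hpos]
      exact (real_inner_le_norm _ _).trans
        (mul_le_mul hle ((sHess f x).le_opNorm w) (norm_nonneg _) hpos.le)
  rcases (norm_nonneg w).eq_or_lt with hw | hw
  · exact hw ▸ norm_nonneg _
  · exact le_of_mul_le_mul_right hsq hw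

lemma sgrad_const_mul (hf : DifferentiableAt ℝ f x) (c : ℝ) :
    sgrad (fun x => c * f x) x = c • sgrad f x := by
  have h : gradient (fun x => c * f x) x = c • gradient f x := by
    simp [gradient, fderiv_const_mul hf]
  simp only [sgrad, h, real_inner_smul_left, smul_sub, smul_smul]

variable [NeZero n] {L ε s : ℝ}

lemma covarianceInequality_sphMeasure (hn : 3 ≤ n) (hf : ContDiff ℝ 1 f)
    (hL : ∀ x, ‖x‖ = 1 → ‖sgrad f x‖ ≤ L) :
    CovarianceInequality f (sphMeasure n) (covConst n * L ^ 2) :=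
  fun _ => covariance_comp_sphMeasure_le_of_norm_sgrad_le hn hf hL

lemma integral_exp_mul_norm_sgrad_sq_add_le (hn : 3 ≤ n) (hf : ContDiff ℝ 2 f)
    (hL : ∀ x, ‖x‖ = 1 → ‖sHess f x‖ ≤ L) (hε : 0 < ε) (hs : 0 ≤ s) (hη : 0 < η)
    (hA : ∫ x, ‖sgrad f x‖ ^ 2 ∂sphMeasure n + η ≤ 4 * ε * (covConst n * L ^ 2)) :
    (1 - ε - 2 * (covConst n * L ^ 2) * s) *
        ∫ x, (Real.exp (s * (‖sgrad f x‖ ^ 2 + η)) - 1) ∂sphMeasure n ≤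
      (1 - ε) * s * (∫ x, ‖sgrad f x‖ ^ 2 ∂sphMeasure n + η) := by
  have := continuous_sgrad (hf.of_le one_le_two)
  have hg := contDiff_sqrt_norm_sgrad_sq_add hf hη
  obtain ⟨C, hC⟩ := exists_ae_abs_le_sphMeasure hg.continuous
  have hcov := covarianceInequality_sphMeasure hn hg fun x hx =>
    (norm_sgrad_sqrt_norm_sgrad_sq_add_le hf hη hx).trans (hL x hx)
  have hsq (x : E n) : √(‖sgrad f x‖ ^ 2 + η) ^ 2 = ‖sgrad f x‖ ^ 2 + η :=
    Real.sq_sqrt (by positivity)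
  have hadd : ∫ x, (‖sgrad f x‖ ^ 2 + η) ∂sphMeasure n =
      ∫ x, ‖sgrad f x‖ ^ 2 ∂sphMeasure n + η := by
    rw [integral_add (integrable_sphMeasure (by fun_prop)) (integrable_const _)]
    simp
  simpa only [hsq, hadd] using hcov.mul_integral_exp_mul_sq_sub_one_le
    hg.continuous.aemeasurable hC hε (by simpa only [hsq, hadd] using hA) hs

/-- The covariance inequality holds for `√(|∇_S f|² + η)`, a smooth substitute for `|∇_S f|` whose
spherical gradient is controlled by the spherical Hessian of `f`. -/
theorem mul_integral_exp_mul_norm_sgrad_sq_sub_one_le (hn : 3 ≤ n) (hf : ContDiff ℝ 2 f)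
    (hL : ∀ x, ‖x‖ = 1 → ‖sHess f x‖ ≤ L) (hε : 0 < ε) (hs : 0 ≤ s)
    (hεs : 2 * (covConst n * L ^ 2) * s ≤ 1 - ε)
    (hA : ∫ x, ‖sgrad f x‖ ^ 2 ∂sphMeasure n < 4 * ε * (covConst n * L ^ 2)) :
    (1 - ε - 2 * (covConst n * L ^ 2) * s) *
        ∫ x, (Real.exp (s * ‖sgrad f x‖ ^ 2) - 1) ∂sphMeasure n ≤
      (1 - ε) * s * ∫ x, ‖sgrad f x‖ ^ 2 ∂sphMeasure n := by
  have := continuous_sgrad (hf.of_le one_le_two)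
  set A := ∫ x, ‖sgrad f x‖ ^ 2 ∂sphMeasure n
  have hlim : Tendsto (fun η => (1 - ε) * s * (A + η)) (nhdsWithin 0 (Set.Ioi 0))
      (nhds ((1 - ε) * s * A)) :=
    tendsto_nhdsWithin_of_tendsto_nhds (Continuous.tendsto' (by fun_prop) _ _ (by simp))
  refine ge_of_tendsto hlim ?_
  filter_upwards [Ioo_mem_nhdsGT (sub_pos.2 hA)] with η hη
  refine le_trans ?_ (integral_exp_mul_norm_sgrad_sq_add_le hn hf hL hε hs hη.1
    (le_sub_iff_add_le'.1 hη.2.le))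
  refine mul_le_mul_of_nonneg_left (integral_sphMeasure_mono (by fun_prop) (by fun_prop)
    fun x _ => ?_) (sub_nonneg.2 hεs)
  gcongr
  linarith [hη.1]

lemma integral_exp_mul_le (hn : 3 ≤ n) (hf : ContDiff ℝ 1 f)
    (hmean : ∫ x, f x ∂sphMeasure n = 0) (c : ℝ) :
    ∫ x, Real.exp (c * f x) ∂sphMeasure n ≤
      ∫ x, Real.exp (covConst n * c ^ 2 * ‖sgrad f x‖ ^ 2) ∂sphMeasure n := by
  have h := integral_exp_le_integral_exp_norm_sgrad_sq hn (contDiff_const (c := c) |>.mul hf)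
    (by rw [integral_const_mul, hmean, mul_zero])
  simpa only [sgrad_const_mul (hf.differentiable one_ne_zero _), norm_smul, mul_pow,
    Real.norm_eq_abs, sq_abs, mul_assoc] using h

end GradientNorm

section LargeDimension

lemma exp_abs_le (x : ℝ) : Real.exp |x| ≤ Real.exp x + Real.exp (-x) + x ^ 2 - 3 / 4 := by
  rcases abs_cases x with ⟨h, _⟩ | ⟨h, _⟩ <;> rw [h]
  · nlinarith [Real.add_one_le_exp (-x), sq_nonneg (x - 1 / 2)]
  · nlinarith [Real.add_one_le_exp x, sq_nonneg (x + 1 / 2)]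

lemma sq_covConst_mul_le (hn : 5 ≤ n) : (covConst n * ((n : ℝ) - 1)) ^ 2 ≤ 4 / 3 := by
  have hn' : (5 : ℝ) ≤ n := by exact_mod_cast hn
  have h := covConst_sq_mul (n := n) (by omega)
  nlinarith [mul_nonneg (sq_nonneg (covConst n))
    (mul_nonneg (by linarith : (0 : ℝ) ≤ n - 1) (by linarith : (0 : ℝ) ≤ n - 5))]

lemma one_lt_mul_covConst (hn : 5 ≤ n) : 1 < 6 / 5 * ((n : ℝ) - 2) * covConst n := by
  have hn' : (5 : ℝ) ≤ n := by exact_mod_cast hn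
  have hκ := covConst_pos (n := n) (by omega)
  have hnonneg : 0 ≤ 6 / 5 * ((n : ℝ) - 2) * covConst n :=
    mul_nonneg (by linarith) (covConst_pos (by omega)).le
  refine lt_of_pow_lt_pow_left₀ 2 hnonneg ?_
  have h := covConst_sq_mul (n := n) (by omega)
  nlinarith [mul_pos (pow_pos hκ 2) (by nlinarith : (0 : ℝ) < (n - 2) * (11 * n - 47))]

lemma le_quarter_of_mul_le {u β B Y : ℝ} (hu₀ : 0 ≤ u) (hu : u ^ 2 ≤ 4 / 3) (hβ : 0 ≤ β)
    (hB : B ≤ 4 / 3 * β)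
    (h : (7 / 10 - u ^ 2 / (2 * (1 + β) ^ 2)) * Y ≤ 7 / 10 * (u * B / (4 * (1 + β) ^ 2))) :
    Y ≤ 1 / 4 := by
  have hu₁ : u ≤ 231 / 200 := (abs_le_of_sq_le_sq' (by linarith) (by norm_num)).2
  have huB : u * B ≤ 231 / 200 * (4 / 3 * β) :=
    (mul_le_mul_of_nonneg_left hB hu₀).trans (by gcongr)
  have hmul : (7 / 10 * (1 + β) ^ 2 - u ^ 2 / 2) * Y ≤ 7 / 40 * (u * B) := calc
    (7 / 10 * (1 + β) ^ 2 - u ^ 2 / 2) * Y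
      = (1 + β) ^ 2 * ((7 / 10 - u ^ 2 / (2 * (1 + β) ^ 2)) * Y) := by field_simp
    _ ≤ (1 + β) ^ 2 * (7 / 10 * (u * B / (4 * (1 + β) ^ 2))) := by gcongr
    _ = 7 / 40 * (u * B) := by field_simp; ring
  have hpos : 0 < 7 / 10 * (1 + β) ^ 2 - u ^ 2 / 2 := by nlinarith
  refine le_of_mul_le_mul_left (hmul.trans ?_) hpos
  nlinarith

variable [NeZero n] {f : E n → ℝ} {β c t : ℝ}

lemma integral_exp_mul_abs_le (hf : Continuous f) (ht : 0 ≤ t) :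
    ∫ x, Real.exp (t * |f x|) ∂sphMeasure n ≤
      ∫ x, Real.exp (t * f x) ∂sphMeasure n + ∫ x, Real.exp (-t * f x) ∂sphMeasure n +
        (t ^ 2 * ∫ x, f x ^ 2 ∂sphMeasure n - 3 / 4) := calc
  ∫ x, Real.exp (t * |f x|) ∂sphMeasure n
    ≤ ∫ x, (Real.exp (t * f x) + Real.exp (-t * f x) + (t ^ 2 * f x ^ 2 - 3 / 4))
        ∂sphMeasure n := by
      refine integral_sphMeasure_mono (by fun_prop) (by fun_prop) fun x _ => ?_
      have := exp_abs_le (t * f x)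
      rw [abs_mul, abs_of_nonneg ht, mul_pow] at this
      rw [neg_mul]
      linarith
  _ = _ := by
      rw [integral_add (integrable_sphMeasure (by fun_prop)) (integrable_sphMeasure (by fun_prop)),
        integral_add (integrable_sphMeasure (by fun_prop)) (integrable_sphMeasure (by fun_prop)),
        integral_sub (integrable_sphMeasure (by fun_prop)) (integrable_const _),
        integral_const_mul]
      simp

lemma integral_exp_mul_norm_sgrad_sq_sub_one_le_quarter (hn : 5 ≤ n) (hf : ContDiff ℝ 2 f)
    (hlin : ∀ e : E n, ∫ x, ⟪e, x⟫ * f x ∂sphMeasure n = 0)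
    (hop : ∀ x, ‖x‖ = 1 → ‖sHess f x‖ ≤ 1) (hβ₀ : 0 ≤ β) (hβ₁ : β ≤ 1)
    (hHS : ∫ x, hsNormSq (sHess f x) ∂sphMeasure n ≤ β)
    (hc : c ^ 2 = (((n : ℝ) - 1) / (2 * (1 + β))) ^ 2) :
    ∫ x, (Real.exp (covConst n * c ^ 2 * ‖sgrad f x‖ ^ 2) - 1) ∂sphMeasure n ≤ 1 / 4 := by
  have hn' : (5 : ℝ) ≤ n := by exact_mod_cast hn
  have hκ := covConst_pos (n := n) (by omega)
  have hu := sq_covConst_mul_le hn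
  have hA := (mul_integral_norm_sgrad_sq_le (by omega) hf hlin).trans hHS
  set A := ∫ x, ‖sgrad f x‖ ^ 2 ∂sphMeasure n
  have hA₀ : 0 ≤ A := integral_nonneg fun x => by positivity
  have hεs : 2 * (covConst n * 1 ^ 2) * (covConst n * c ^ 2) =
      (covConst n * ((n : ℝ) - 1)) ^ 2 / (2 * (1 + β) ^ 2) := by
    rw [hc]; field_simp
  have hsA : covConst n * c ^ 2 * A =
      covConst n * ((n : ℝ) - 1) * (((n : ℝ) - 1) * A) / (4 * (1 + β) ^ 2) := by
    rw [hc]; field_simp; ring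
  have h := mul_integral_exp_mul_norm_sgrad_sq_sub_one_le (ε := 3 / 10) (s := covConst n * c ^ 2)
    (by omega) hf hop (by norm_num) (by positivity)
    (by rw [hεs, div_le_iff₀ (by positivity)]; nlinarith)
    (by nlinarith [mul_lt_mul_of_pos_left (one_lt_mul_covConst hn) hκ, one_lt_mul_covConst hn])
  rw [mul_assoc _ (covConst n * c ^ 2), hsA, hεs,
    show (1 : ℝ) - 3 / 10 = 7 / 10 by norm_num] at h
  exact le_quarter_of_mul_le (mul_nonneg hκ.le (by linarith)) hu hβ₀ (by nlinarith) h

lemma integral_exp_mul_abs_le_two_of_five_le (hn : 5 ≤ n) (hf : ContDiff ℝ 2 f)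
    (hmean : ∫ x, f x ∂sphMeasure n = 0)
    (hlin : ∀ e : E n, ∫ x, ⟪e, x⟫ * f x ∂sphMeasure n = 0)
    (hop : ∀ x, ‖x‖ = 1 → ‖sHess f x‖ ≤ 1) (hβ₀ : 0 ≤ β) (hβ₁ : β ≤ 1)
    (hHS : ∫ x, hsNormSq (sHess f x) ∂sphMeasure n ≤ β) :
    ∫ x, Real.exp (((n : ℝ) - 1) / (2 * (1 + β)) * |f x|) ∂sphMeasure n ≤ 2 := by
  have hn' : (5 : ℝ) ≤ n := by exact_mod_cast hn
  have := hf.continuous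
  have := continuous_sgrad (hf.of_le one_le_two)
  set t := ((n : ℝ) - 1) / (2 * (1 + β)) with ht
  have hexp (c : ℝ) (hc : c ^ 2 = t ^ 2) : ∫ x, Real.exp (c * f x) ∂sphMeasure n ≤ 5 / 4 := by
    have h := integral_exp_mul_norm_sgrad_sq_sub_one_le_quarter hn hf hlin hop hβ₀ hβ₁ hHS hc
    rw [integral_sub (integrable_sphMeasure (by fun_prop)) (integrable_const _)] at h
    simp only [integral_const, probReal_univ, one_smul] at h
    linarith [integral_exp_mul_le (by omega) (hf.of_le one_le_two) hmean c]
  have hsq : t ^ 2 * ∫ x, f x ^ 2 ∂sphMeasure n ≤ 1 / 12 := by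
    have hvar := (mul_mul_integral_sq_le (by omega) hf hmean hlin).trans hHS
    have h₀ : 0 ≤ ∫ x, f x ^ 2 ∂sphMeasure n := integral_nonneg fun x => by positivity
    rw [ht, div_pow, div_mul_eq_mul_div, div_le_iff₀ (by positivity)]
    nlinarith [sq_nonneg (β - 1), mul_nonneg (mul_nonneg h₀ (by linarith : (0 : ℝ) ≤ n - 1))
      (by linarith : (0 : ℝ) ≤ n - 5)]
  have ht₀ : 0 ≤ t := div_nonneg (by linarith) (by linarith)
  linarith [integral_exp_mul_abs_le hf.continuous ht₀, hexp t rfl, hexp (-t) (neg_sq t)]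

end LargeDimension

/-! ### Low dimensions -/

section Oscillation

open InnerProductGeometry

lemma le_apply_add_mul_sq_div_two {h h' h'' : ℝ → ℝ} {L s : ℝ}
    (hh : ∀ s, HasDerivAt h (h' s) s) (hh' : ∀ s, HasDerivAt h' (h'' s) s)
    (hL : ∀ s, -L ≤ h'' s) (h₀ : h' 0 = 0) (hs : 0 ≤ s) : h 0 ≤ h s + L * (s ^ 2 / 2) := by
  have hmono : Monotone fun s => h' s + L * s :=
    monotone_of_hasDerivAt_nonneg (fun s => (hh' s).add ((hasDerivAt_id s).const_mul L))
      fun s => by simpa using neg_le_iff_add_nonneg.1 (hL s)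
  have hderiv (s : ℝ) : HasDerivAt (fun s => h s + L * (s ^ 2 / 2)) (h' s + L * s) s :=
    ((hh s).add ((((hasDerivAt_id s).pow 2).div_const 2).const_mul L)).congr_deriv (by simp)
  have hmonoOn : MonotoneOn (fun s => h s + L * (s ^ 2 / 2)) (Set.Ici 0) :=
    monotoneOn_of_hasDerivWithinAt_nonneg (convex_Ici 0)
      (fun s _ => (hderiv s).continuousAt.continuousWithinAt)
      (fun s _ => (hderiv s).hasDerivWithinAt)
      fun s hs => by simpa [h₀] using hmono (interior_subset hs : (0 : ℝ) ≤ s)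
  simpa using hmonoOn Set.self_mem_Ici hs hs

lemma sub_le_mul_sq_div_four {h h' h'' : ℝ → ℝ} {L b : ℝ}
    (hh : ∀ s, HasDerivAt h (h' s) s) (hh' : ∀ s, HasDerivAt h' (h'' s) s)
    (hL : ∀ s, |h'' s| ≤ L) (h₀ : h' 0 = 0) (hb₀ : h' b = 0) (hb : 0 ≤ b) :
    h 0 - h b ≤ L * (b ^ 2 / 4) := by
  have hleft := le_apply_add_mul_sq_div_two hh hh' (fun s => (abs_le.1 (hL s)).1) h₀
    (div_nonneg hb zero_le_two)
  have hreflect (s : ℝ) : HasDerivAt (fun s => b - s) (-1) s := by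
    simpa using (hasDerivAt_id s).const_sub b
  have hright := le_apply_add_mul_sq_div_two (h := fun s => -h (b - s)) (h' := fun s => h' (b - s))
    (h'' := fun s => -h'' (b - s)) (L := L)
    (fun s => (((hh (b - s)).comp s (hreflect s)).neg).congr_deriv (by ring))
    (fun s => ((hh' (b - s)).comp s (hreflect s)).congr_deriv (by ring))
    (fun s => neg_le_neg (abs_le.1 (hL _)).2) (by simpa using hb₀) (div_nonneg hb zero_le_two)
  simp only [sub_zero, sub_half] at hright
  linarith

section GreatCircle

variable {V : Type*} [NormedAddCommGroup V] [InnerProductSpace ℝ V] {x w : V}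

/-- The great circle through the orthonormal vectors `x` and `w`, parametrized by arc length and
starting at `x`. Its velocity is `greatCircle w (-x)`. -/
def greatCircle (x w : V) (s : ℝ) : V := Real.cos s • x + Real.sin s • w

lemma greatCircle_zero (x w : V) : greatCircle x w 0 = x := by simp [greatCircle]

lemma greatCircle_neg_neg (x w : V) (s : ℝ) : greatCircle (-x) (-w) s = -greatCircle x w s := by
  simp only [greatCircle, smul_neg, neg_add]

lemma hasDerivAt_greatCircle (x w : V) (s : ℝ) :
    HasDerivAt (greatCircle x w) (greatCircle w (-x) s) s :=
  (((Real.hasDerivAt_cos s).smul_const x).add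
    ((Real.hasDerivAt_sin s).smul_const w)).congr_deriv (by simp only [greatCircle]; module)

lemma norm_greatCircle (hx : ‖x‖ = 1) (hw : ‖w‖ = 1) (hxw : ⟪x, w⟫ = 0) (s : ℝ) :
    ‖greatCircle x w s‖ = 1 := by
  rw [greatCircle, ← sq_eq_sq₀ (norm_nonneg _) zero_le_one, norm_add_sq_real,
    real_inner_smul_left, real_inner_smul_right, hxw, norm_smul, norm_smul, hx, hw]
  simp

lemma norm_greatCircle_neg (hx : ‖x‖ = 1) (hw : ‖w‖ = 1) (hxw : ⟪x, w⟫ = 0) (s : ℝ) :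
    ‖greatCircle w (-x) s‖ = 1 :=
  norm_greatCircle hw (by rwa [norm_neg]) (by rw [inner_neg_right, real_inner_comm, hxw, neg_zero])
    s

lemma inner_greatCircle_greatCircle_neg (hx : ‖x‖ = 1) (hw : ‖w‖ = 1) (hxw : ⟪x, w⟫ = 0) (s : ℝ) :
    ⟪greatCircle x w s, greatCircle w (-x) s⟫ = 0 := by
  simp only [greatCircle, inner_add_left, inner_add_right, real_inner_smul_left,
    real_inner_smul_right, inner_neg_right, hxw, (real_inner_comm x w).trans hxw,
    real_inner_self_eq_norm_sq, hx, hw]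
  ring

end GreatCircle

variable {f : E n → ℝ} {x y w : E n} {L : ℝ}

lemma hasDerivAt_comp_greatCircle (hf : Differentiable ℝ f) (x w : E n) (s : ℝ) :
    HasDerivAt (fun s => f (greatCircle x w s))
      ⟪gradient f (greatCircle x w s), greatCircle w (-x) s⟫ s := by
  rw [inner_gradient_left]
  exact (hf _).hasFDerivAt.comp_hasDerivAt s (hasDerivAt_greatCircle x w s)

lemma hasDerivAt_inner_gradient_greatCircle (hf : ContDiff ℝ 2 f) (hx : ‖x‖ = 1) (hw : ‖w‖ = 1)
    (hxw : ⟪x, w⟫ = 0) (s : ℝ) :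
    HasDerivAt (fun s => ⟪gradient f (greatCircle x w s), greatCircle w (-x) s⟫)
      ⟪sHess f (greatCircle x w s) (greatCircle w (-x) s), greatCircle w (-x) s⟫ s := by
  have horth := inner_greatCircle_greatCircle_neg hx hw hxw s
  refine (((hasFDerivAt_gradient hf _).comp_hasDerivAt s (hasDerivAt_greatCircle x w s)).inner ℝ
    (hasDerivAt_greatCircle w (-x) s)).congr_deriv ?_
  rw [sHess_apply f horth, inner_sub_left, inner_sub_left, real_inner_smul_left,
    real_inner_smul_left, horth, real_inner_self_eq_norm_sq, norm_greatCircle_neg hx hw hxw s,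
    greatCircle_neg_neg, inner_neg_right, Function.comp_apply]
  ring

/-- Along the great circle from a maximum point to a minimum point of `f`, the derivative of `f`
vanishes at both ends. -/
theorem sub_le_mul_pi_sq_div_four (hn : 2 ≤ n) (hf : ContDiff ℝ 2 f)
    (hL : ∀ x, ‖x‖ = 1 → ‖sHess f x‖ ≤ L) (hx : ‖x‖ = 1) (hy : ‖y‖ = 1) :
    f x - f y ≤ L * (Real.pi ^ 2 / 4) := by
  have hne : (sphere (0 : E n) 1).Nonempty := ⟨x, by simpa using hx⟩
  obtain ⟨p, hp, hmax⟩ := (isCompact_sphere 0 1).exists_isMaxOn hne hf.continuous.continuousOn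
  obtain ⟨q, hq, hmin⟩ := (isCompact_sphere 0 1).exists_isMinOn hne hf.continuous.continuousOn
  simp only [isMaxOn_iff, isMinOn_iff, mem_sphere_zero_iff_norm] at hp hq hmax hmin
  obtain ⟨w, hw, hpw, hqw⟩ := exists_eq_cos_angle_add_sin_angle (V := E n) (by simpa) hp hq
  change q = greatCircle p w (angle p q) at hqw
  have hderiv := hasDerivAt_comp_greatCircle (hf.differentiable two_ne_zero) p w
  have hnorm := norm_greatCircle hp hw hpw
  have hp' : IsLocalMax (fun s => f (greatCircle p w s)) 0 :=
    .of_forall fun s => by simpa only [greatCircle_zero] using hmax _ (hnorm s)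
  have hq' : IsLocalMin (fun s => f (greatCircle p w s)) (angle p q) :=
    .of_forall fun s => by simpa only [← hqw] using hmin _ (hnorm s)
  have hsHess (s : ℝ) :
      |⟪sHess f (greatCircle p w s) (greatCircle w (-p) s), greatCircle w (-p) s⟫| ≤ L := by
    have h := (sHess f _).le_of_opNorm_le (hL _ (hnorm s)) (greatCircle w (-p) s)
    have hunit := norm_greatCircle_neg hp hw hpw s
    simpa only [hunit, mul_one] using (abs_real_inner_le_norm _ _).trans
      (mul_le_mul_of_nonneg_right h (norm_nonneg (greatCircle w (-p) s)))
  have hosc := sub_le_mul_sq_div_four hderiv (hasDerivAt_inner_gradient_greatCircle hf hp hw hpw)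
    hsHess (hp'.hasDerivAt_eq_zero (hderiv 0)) (hq'.hasDerivAt_eq_zero (hderiv _))
    (angle_nonneg p q)
  rw [greatCircle_zero, ← hqw] at hosc
  calc f x - f y ≤ f p - f q := sub_le_sub (hmax x hx) (hmin y hy)
    _ ≤ L * (angle p q ^ 2 / 4) := hosc
    _ ≤ L * (Real.pi ^ 2 / 4) := by
      gcongr
      · exact (norm_nonneg _).trans (hL x hx)
      · exact angle_nonneg p q
      · exact angle_le_pi p q

end Oscillation

section LowDimension

open ProbabilityTheory

lemma exp_mul_sub_le {c M : ℝ} (hc₀ : 0 ≤ c) (hc₁ : c ≤ 1) (hM : 0 ≤ M) :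
    Real.exp (c * M) - 1 - c * M ≤ c ^ 2 * (Real.exp M - 1 - M) := by
  have hseries (x : ℝ) :
      HasSum (fun k => x ^ (k + 2) / (k + 2).factorial) (Real.exp x - 1 - x) := by
    have := (hasSum_nat_add_iff' 2).2 (NormedSpace.expSeries_div_hasSum_exp (𝔸 := ℝ) x)
    rw [← Real.exp_eq_exp_ℝ] at this
    simpa [Finset.sum_range_succ, sub_sub] using this
  refine hasSum_le (fun k => ?_) (hseries (c * M)) ((hseries M).mul_left (c ^ 2))
  rw [mul_pow, ← mul_div_assoc]
  gcongr ?_ * _ / _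
  exact pow_le_pow_of_le_one hc₀ hc₁ (by omega)

lemma exp_le_one_add_add_mul_sq {M K x : ℝ} (hM : 0 < M)
    (hK : Real.exp M ≤ 1 + M + K * M ^ 2) (hx₀ : 0 ≤ x) (hxM : x ≤ M) :
    Real.exp x ≤ 1 + x + K * x ^ 2 := by
  have h := exp_mul_sub_le (div_nonneg hx₀ hM.le) ((div_le_one hM).2 hxM) hM.le
  rw [div_mul_cancel₀ _ hM.ne'] at h
  have hquad : (x / M) ^ 2 * (Real.exp M - 1 - M) ≤ K * x ^ 2 := calc
    (x / M) ^ 2 * (Real.exp M - 1 - M) ≤ (x / M) ^ 2 * (K * M ^ 2) := by gcongr; linarith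
    _ = K * x ^ 2 := by field_simp
  linarith

section Bounded

variable {Ω : Type*} [MeasurableSpace Ω] {μ : Measure Ω} [IsProbabilityMeasure μ] {X : Ω → ℝ}

lemma integral_exp_abs_le_two_of_bounded {K M : ℝ} (hM : 0 < M)
    (hK : Real.exp M ≤ 1 + M + K * M ^ 2) (hX : AEMeasurable X μ) (hXM : ∀ᵐ ω ∂μ, |X ω| ≤ M)
    (hsq : (1 + K) * ∫ ω, X ω ^ 2 ∂μ ≤ 3 / 4) : ∫ ω, Real.exp |X ω| ∂μ ≤ 2 := by
  have hint {φ : ℝ → ℝ} (hφ : Continuous φ) : Integrable (fun ω => φ (X ω)) μ :=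
    integrable_comp_of_bounded hX hXM hφ
  calc ∫ ω, Real.exp |X ω| ∂μ
      ≤ ∫ ω, (5 / 4 + (1 + K) * X ω ^ 2) ∂μ := by
        refine integral_mono_ae (hint (φ := fun y => Real.exp |y|) (by fun_prop))
          (hint (φ := fun y => 5 / 4 + (1 + K) * y ^ 2) (by fun_prop)) ?_
        filter_upwards [hXM] with ω hω
        have h := exp_le_one_add_add_mul_sq hM hK (abs_nonneg _) hω
        rw [sq_abs] at h
        nlinarith [sq_nonneg (|X ω| - 1 / 2), sq_abs (X ω)]
    _ = 5 / 4 + (1 + K) * ∫ ω, X ω ^ 2 ∂μ := by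
        rw [integral_add (integrable_const _) ((hint (φ := fun y => y ^ 2)
          (by fun_prop)).const_mul _), integral_const_mul]
        simp
    _ ≤ 2 := by linarith

end Bounded

variable [NeZero n] {f : E n → ℝ} {D β t : ℝ}

lemma abs_le_of_sub_le (hf : Continuous f) (hmean : ∫ x, f x ∂sphMeasure n = 0)
    (hD : ∀ x y, ‖x‖ = 1 → ‖y‖ = 1 → f x - f y ≤ D) {x : E n} (hx : ‖x‖ = 1) : |f x| ≤ D := by
  have hN := ae_iff.1 (ae_sphMeasure_norm_eq_one n)
  obtain ⟨y, hy, hfy⟩ := exists_notMem_null_integral_le (integrable_sphMeasure hf) hN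
  obtain ⟨z, hz, hfz⟩ := exists_notMem_null_le_integral (integrable_sphMeasure hf) hN
  simp only [Set.mem_ofPred_eq, not_not] at hy hz
  rw [hmean] at hfy hfz
  exact abs_le.2 ⟨by linarith [hD y x hy hx], by linarith [hD x z hx hz]⟩

lemma integral_sq_le_of_sub_le (hf : Continuous f) (hmean : ∫ x, f x ∂sphMeasure n = 0)
    (hD : ∀ x y, ‖x‖ = 1 → ‖y‖ = 1 → f x - f y ≤ D) :
    ∫ x, f x ^ 2 ∂sphMeasure n ≤ (D / 2) ^ 2 := by
  have hne : (sphere (0 : E n) 1).Nonempty := NormedSpace.sphere_nonempty.2 zero_le_one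
  obtain ⟨q, hq, hmin⟩ := (isCompact_sphere 0 1).exists_isMinOn hne hf.continuousOn
  simp only [isMinOn_iff, mem_sphere_zero_iff_norm] at hq hmin
  have hbdd : ∀ᵐ x ∂sphMeasure n, f x ∈ Set.Icc (f q) (f q + D) := by
    filter_upwards [ae_sphMeasure_norm_eq_one n] with x hx
    exact ⟨hmin x hx, by linarith [hD x q hx hq]⟩
  simpa [variance_of_integral_eq_zero hf.aemeasurable hmean] using
    variance_le_sq_of_bounded hbdd hf.aemeasurable

lemma integral_exp_mul_abs_le_two_of_sub_le {K M : ℝ} (hf : Continuous f)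
    (hmean : ∫ x, f x ∂sphMeasure n = 0) (hD : ∀ x y, ‖x‖ = 1 → ‖y‖ = 1 → f x - f y ≤ D)
    (ht : 0 ≤ t) (hM : 0 < M) (htM : t * D ≤ M) (hK : Real.exp M ≤ 1 + M + K * M ^ 2)
    (hsq : (1 + K) * (t ^ 2 * ∫ x, f x ^ 2 ∂sphMeasure n) ≤ 3 / 4) :
    ∫ x, Real.exp (t * |f x|) ∂sphMeasure n ≤ 2 := by
  have habs (x : E n) : |t * f x| = t * |f x| := by rw [abs_mul, abs_of_nonneg ht]
  simp only [← habs]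
  refine integral_exp_abs_le_two_of_bounded hM hK (hf.const_mul t).aemeasurable ?_ ?_
  · filter_upwards [ae_sphMeasure_norm_eq_one n] with x hx
    rw [habs]
    exact (mul_le_mul_of_nonneg_left (abs_le_of_sub_le hf hmean hD hx) ht).trans htM
  · simpa only [mul_pow, integral_const_mul] using hsq

lemma integral_exp_mul_abs_le_two_of_le_half (hf : Continuous f)
    (hmean : ∫ x, f x ∂sphMeasure n = 0) (hD : ∀ x y, ‖x‖ = 1 → ‖y‖ = 1 → f x - f y ≤ 5 / 2)
    (ht₀ : 0 ≤ t) (ht : t ≤ 1 / 2) : ∫ x, Real.exp (t * |f x|) ∂sphMeasure n ≤ 2 := by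
  have hexp : Real.exp (5 / 4) ≤ 1 + 5 / 4 + 23 / 25 * (5 / 4) ^ 2 := by
    refine le_of_pow_le_pow_left₀ four_ne_zero (by norm_num) ?_
    calc Real.exp (5 / 4) ^ 4 = Real.exp 1 ^ 5 := by
          rw [← Real.exp_nat_mul, ← Real.exp_nat_mul]; norm_num
      _ ≤ 2.7182818286 ^ 5 := by gcongr; exact Real.exp_one_lt_d9.le
      _ ≤ _ := by norm_num
  have hvar := integral_sq_le_of_sub_le hf hmean hD
  have hsq : t ^ 2 * ∫ x, f x ^ 2 ∂sphMeasure n ≤ (1 / 2) ^ 2 * (5 / 2 / 2) ^ 2 := by gcongr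
  exact integral_exp_mul_abs_le_two_of_sub_le hf hmean hD ht₀ (by norm_num) (by linarith) hexp
    (by linarith)

lemma integral_exp_mul_abs_le_two_of_le_four (hn : 2 ≤ n) (hn₄ : n ≤ 4) (hf : ContDiff ℝ 2 f)
    (hmean : ∫ x, f x ∂sphMeasure n = 0)
    (hlin : ∀ e : E n, ∫ x, ⟪e, x⟫ * f x ∂sphMeasure n = 0)
    (hop : ∀ x, ‖x‖ = 1 → ‖sHess f x‖ ≤ 1) (hβ : 0 ≤ β)
    (hHS : ∫ x, hsNormSq (sHess f x) ∂sphMeasure n ≤ β) :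
    ∫ x, Real.exp (((n : ℝ) - 1) / (2 * (1 + β)) * |f x|) ∂sphMeasure n ≤ 2 := by
  have hn' : (2 : ℝ) ≤ n := by exact_mod_cast hn
  have hn₄' : (n : ℝ) ≤ 4 := by exact_mod_cast hn₄
  have hD (x y : E n) (hx : ‖x‖ = 1) (hy : ‖y‖ = 1) : f x - f y ≤ 5 / 2 :=
    (sub_le_mul_pi_sq_div_four hn hf hop hx hy).trans
      (by nlinarith [Real.pi_pos, Real.pi_lt_d2])
  set t := ((n : ℝ) - 1) / (2 * (1 + β)) with ht
  have ht₀ : 0 ≤ t := div_nonneg (by linarith) (by positivity)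
  have ht₁ : t ≤ ((n : ℝ) - 1) / 2 :=
    div_le_div_of_nonneg_left (by linarith) two_pos (by linarith)
  obtain rfl | hn₃ := hn.eq_or_lt
  · exact integral_exp_mul_abs_le_two_of_le_half hf.continuous hmean hD ht₀
      (ht₁.trans (by norm_num))
  have hn₃' : (3 : ℝ) ≤ n := by exact_mod_cast hn₃
  have hexp : Real.exp 4 ≤ 1 + 4 + 5 * 4 ^ 2 := calc
    Real.exp 4 = Real.exp 1 ^ 4 := by rw [← Real.exp_nat_mul]; norm_num
    _ ≤ 3 ^ 4 := by gcongr; exact Real.exp_one_lt_three.le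
    _ ≤ _ := by norm_num
  have hsq : t ^ 2 * ∫ x, f x ^ 2 ∂sphMeasure n ≤ 1 / 8 := by
    have hvar := (mul_mul_integral_sq_le hn₃ hf hmean hlin).trans hHS
    have h₀ : 0 ≤ ∫ x, f x ^ 2 ∂sphMeasure n := integral_nonneg fun x => by positivity
    rw [ht, div_pow, div_mul_eq_mul_div, div_le_iff₀ (by positivity)]
    nlinarith [sq_nonneg (β - 1), mul_nonneg (mul_nonneg h₀ (by linarith : (0 : ℝ) ≤ n - 1))
      (by linarith : (0 : ℝ) ≤ n - 3)]
  exact integral_exp_mul_abs_le_two_of_sub_le hf.continuous hmean hD ht₀ four_pos (by linarith)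
    hexp (by linarith)

end LowDimension

section Rescaling

variable {f : E n → ℝ}

lemma hsNormSq_smul (a : ℝ) (A : E n →L[ℝ] E n) : hsNormSq (a • A) = a ^ 2 * hsNormSq A := by
  simp [hsNormSq, norm_smul, mul_pow, Finset.mul_sum]

lemma sHess_const_mul (hf : ContDiff ℝ 2 f) (a : ℝ) (x : E n) :
    sHess (fun x => a * f x) x = a • sHess f x := by
  have hgrad : gradient (fun x => a * f x) = fun x => a • gradient f x := funext fun x => by
    simp [gradient, fderiv_const_mul (hf.differentiable two_ne_zero x)]
  have hhess : hess (fun x => a * f x) x = a • hess f x := by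
    rw [hess, hgrad]
    exact fderiv_const_smul ((contDiff_gradient hf).differentiable one_ne_zero x) a
  ext1 w
  simp only [sHess, hgrad, hhess, real_inner_smul_left, ContinuousLinearMap.comp_apply, sub_apply,
    smul_apply, map_sub, map_smul, mul_smul, smul_sub]

variable [NeZero n]

lemma integral_exp_mul_abs_le_two_of_le_one (hn : 2 ≤ n) (hf : ContDiff ℝ 2 f)
    (hmean : ∫ x, f x ∂sphMeasure n = 0)
    (hlin : ∀ e : E n, ∫ x, ⟪e, x⟫ * f x ∂sphMeasure n = 0)
    (hop : ∀ x, ‖x‖ = 1 → ‖sHess f x‖ ≤ 1) {β : ℝ} (hβ₀ : 0 ≤ β) (hβ₁ : β ≤ 1)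
    (hHS : ∫ x, hsNormSq (sHess f x) ∂sphMeasure n ≤ β) :
    ∫ x, Real.exp (((n : ℝ) - 1) / (2 * (1 + β)) * |f x|) ∂sphMeasure n ≤ 2 := by
  obtain hn₄ | hn₅ := le_or_gt n 4
  · exact integral_exp_mul_abs_le_two_of_le_four hn hn₄ hf hmean hlin hop hβ₀ hHS
  · exact integral_exp_mul_abs_le_two_of_five_le hn₅ hf hmean hlin hop hβ₀ hβ₁ hHS

/-- For `b > 1`, apply the case `b = 1` to `b⁻¹ f` and use `2 * b ≤ 1 + b ^ 2`. -/
theorem integral_exp_mul_abs_le_two (hn : 2 ≤ n) (hf : ContDiff ℝ 2 f)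
    (hmean : ∫ x, f x ∂sphMeasure n = 0)
    (hlin : ∀ e : E n, ∫ x, ⟪e, x⟫ * f x ∂sphMeasure n = 0)
    (hop : ∀ x, ‖x‖ = 1 → ‖sHess f x‖ ≤ 1) {b : ℝ} (hb : 0 ≤ b)
    (hHS : ∫ x, hsNormSq (sHess f x) ∂sphMeasure n ≤ b ^ 2) :
    ∫ x, Real.exp (((n : ℝ) - 1) / (2 * (1 + b ^ 2)) * |f x|) ∂sphMeasure n ≤ 2 := by
  obtain hb₁ | hb₁ := le_or_gt b 1
  · exact integral_exp_mul_abs_le_two_of_le_one hn hf hmean hlin hop (sq_nonneg b)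
      (pow_le_one₀ hb hb₁) hHS
  have hn' : (2 : ℝ) ≤ n := by exact_mod_cast hn
  have := hf.continuous
  have hmean' : ∫ x, b⁻¹ * f x ∂sphMeasure n = 0 := by
    rw [integral_const_mul, hmean, mul_zero]
  have hlin' (e : E n) : ∫ x, ⟪e, x⟫ * (b⁻¹ * f x) ∂sphMeasure n = 0 := by
    simp_rw [mul_left_comm _ b⁻¹]
    rw [integral_const_mul, hlin, mul_zero]
  have hop' (x : E n) (hx : ‖x‖ = 1) : ‖sHess (fun x => b⁻¹ * f x) x‖ ≤ 1 := by
    rw [sHess_const_mul hf, norm_smul, norm_inv, Real.norm_of_nonneg hb]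
    exact mul_le_one₀ (inv_le_one_of_one_le₀ hb₁.le) (norm_nonneg _) (hop x hx)
  have hHS' : ∫ x, hsNormSq (sHess (fun x => b⁻¹ * f x) x) ∂sphMeasure n ≤ 1 := by
    simp_rw [sHess_const_mul hf, hsNormSq_smul]
    rwa [integral_const_mul, inv_pow, inv_mul_le_one₀ (by positivity)]
  refine le_trans (integral_sphMeasure_mono (by fun_prop) (by fun_prop) fun x _ =>
    Real.exp_le_exp.2 ?_) (integral_exp_mul_abs_le_two_of_le_one hn (contDiff_const.mul hf) hmean'
      hlin' hop' zero_le_one le_rfl hHS')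
  rw [abs_mul, abs_of_pos (inv_pos.2 (zero_lt_one.trans hb₁)), ← mul_assoc, ← div_eq_mul_inv,
    div_div]
  refine mul_le_mul_of_nonneg_right (div_le_div_of_nonneg_left (by linarith) (by positivity) ?_)
    (abs_nonneg _)
  nlinarith [sq_nonneg (b - 1)]

end Rescaling

section Localization

lemma exists_contDiff_eventuallyEq {F G : Type*} [NormedAddCommGroup F] [NormedSpace ℝ F]
    [FiniteDimensional ℝ F] [NormedAddCommGroup G] [NormedSpace ℝ G] {f : F → G} {U S : Set F}
    {k : ℕ∞} (hU : IsOpen U) (hS : IsClosed S) (hSU : S ⊆ U) (hf : ContDiffOn ℝ k f U) :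
    ∃ g : F → G, ContDiff ℝ k g ∧ ∀ x ∈ S, g =ᶠ[nhds x] f := by
  obtain ⟨χ, hχ₀, hχ₁, -⟩ := exists_contMDiffMap_zero_one_nhds_of_isClosed (n := k)
    (modelWithCornersSelf ℝ F) hU.isClosed_compl hS (Set.disjoint_compl_left_iff_subset.2 hSU)
  refine ⟨fun x => χ x • f x, contDiff_iff_contDiffAt.2 fun x => ?_, fun x hx => ?_⟩
  · by_cases hx : x ∈ U
    · exact χ.contMDiff.contDiff.contDiffAt.smul (hf.contDiffAt (hU.mem_nhds hx))
    · have hzero : (fun x => χ x • f x) =ᶠ[nhds x] fun _ => 0 := by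
        filter_upwards [eventually_nhdsSet_iff_forall.1 hχ₀ x hx] with y hy
        rw [hy, zero_smul]
      exact contDiffAt_const.congr_of_eventuallyEq hzero
  · filter_upwards [eventually_nhdsSet_iff_forall.1 hχ₁ x hx] with y hy
    rw [hy, one_smul]

variable {f g : E n → ℝ}

lemma sHess_congr {x : E n} (h : f =ᶠ[nhds x] g) : sHess f x = sHess g x := by
  have hgrad : gradient f =ᶠ[nhds x] gradient g :=
    h.fderiv.mono fun _ hy => congrArg (InnerProductSpace.toDual ℝ (E n)).symm hy
  rw [sHess, sHess, hess, hess, hgrad.fderiv_eq, hgrad.eq_of_nhds]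

lemma integral_sphMeasure_congr {φ ψ : E n → ℝ} (h : ∀ x, ‖x‖ = 1 → φ x = ψ x) :
    ∫ x, φ x ∂sphMeasure n = ∫ x, ψ x ∂sphMeasure n :=
  integral_congr_ae ((ae_sphMeasure_norm_eq_one n).mono h)

end Localization

/-- **Theorem 1.1/1.2 variant (Statement 0).** Second order concentration on the sphere
in terms of the spherical Hessian. -/
theorem second_order_concentration_spherical_hessian
    {n : ℕ} (hn : 2 ≤ n) (f : E n → ℝ) (U : Set (E n)) (hU : IsOpen U)
    (hUS : Metric.sphere (0 : E n) 1 ⊆ U) (hf : ContDiffOn ℝ 2 f U)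
    (hmean : ∫ θ, f θ ∂sphMeasure n = 0)
    (hlin : ∀ v : E n, ∫ θ, ⟪v, θ⟫ * f θ ∂sphMeasure n = 0)
    (hop : ∀ θ ∈ Metric.sphere (0 : E n) 1, ‖sHess f θ‖ ≤ 1)
    {b : ℝ} (hb : 0 ≤ b)
    (hHS : ∫ θ, hsNormSq (sHess f θ) ∂sphMeasure n ≤ b ^ 2) :
    ∫ θ, Real.exp (((n : ℝ) - 1) / (2 * (1 + b ^ 2)) * |f θ|) ∂sphMeasure n ≤ 2 := by
  have : NeZero n := ⟨by omega⟩
  obtain ⟨g, hg, hgf⟩ := exists_contDiff_eventuallyEq (k := 2) hU isClosed_sphere hUS hf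
  simp only [mem_sphere_zero_iff_norm] at hgf hop
  have heq (θ : E n) (hθ : ‖θ‖ = 1) : g θ = f θ := (hgf θ hθ).eq_of_nhds
  have hsHess (θ : E n) (hθ : ‖θ‖ = 1) : sHess g θ = sHess f θ := sHess_congr (hgf θ hθ)
  calc ∫ θ, Real.exp (((n : ℝ) - 1) / (2 * (1 + b ^ 2)) * |f θ|) ∂sphMeasure n
    _ = ∫ θ, Real.exp (((n : ℝ) - 1) / (2 * (1 + b ^ 2)) * |g θ|) ∂sphMeasure n :=
      integral_sphMeasure_congr fun θ hθ => by rw [heq θ hθ]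
    _ ≤ 2 := integral_exp_mul_abs_le_two hn hg
      ((integral_sphMeasure_congr heq).trans hmean)
      (fun v => (integral_sphMeasure_congr fun θ hθ => by rw [heq θ hθ]).trans (hlin v))
      (fun θ hθ => (hsHess θ hθ).symm ▸ hop θ hθ) hb
      ((integral_sphMeasure_congr fun θ hθ => by rw [hsHess θ hθ]).trans_le hHS)

end SecondOrderConc
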